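/- arXiv:math/0006207 — 3 statements merged into one kernel-verified Lean document; each statement's English description precedes it below -/
import Mathlib

section
/- For every integer L ≥ 1, \sum_{π} A^{ν_1(π) + ν_0(π)} B^{ν_2(π) + ν_0(π)} q^{σ(π)} = \sum_{τ ∈ ℤ} A^{τ} q^{τ(3τ-1)/2} \left( \begin{smallmatrix} L; q^3 \\ τ \end{smallmatrix} \right)_{c = AB}, where the left sum is over all partitions π into parts ≤ 3L−1 such that any two consecutive parts differ by at least 3, with difference strictly greater than 3 whenever the larger part is a multiple of 3; here σ(π) is the sum of the parts of π and ν_r(π) is the number of parts of π congruent to r modulo 3. This is an identity of polynomials in A, B, q. -/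
open Finset

/-- The field `ℚ(A, B, q)` of rational functions in three variables. -/
abbrev K3 := FractionRing (MvPolynomial (Fin 3) ℚ)

/-- The variable `A`. -/
noncomputable def Av : K3 := algebraMap (MvPolynomial (Fin 3) ℚ) K3 (MvPolynomial.X 0)
/-- The variable `B`. -/
noncomputable def Bv : K3 := algebraMap (MvPolynomial (Fin 3) ℚ) K3 (MvPolynomial.X 1)
/-- The variable `q`. -/
noncomputable def qv : K3 := algebraMap (MvPolynomial (Fin 3) ℚ) K3 (MvPolynomial.X 2)

/-- `(x; x)_n = ∏_{t=0}^{n-1} (1 - x^{t+1})`. -/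
noncomputable def pochK (x : K3) (n : ℕ) : K3 := ∏ t ∈ Finset.range n, (1 - x ^ (t + 1))

/-- The q-multinomial coefficient of order 3 with base `x`, set to `0` if any lower
argument is negative. -/
noncomputable def trinK (x : K3) (u v w : ℤ) : K3 :=
  if 0 ≤ u ∧ 0 ≤ v ∧ 0 ≤ w then
    pochK x (u + v + w).toNat / (pochK x u.toNat * pochK x v.toNat * pochK x w.toNat) else 0

/-- The Andrews–Baxter generalized q-trinomial coefficient with base `x` and
parameter `c`:  `(L; x; τ)_c = ∑_j c^j x^{j(j+τ)} [L; j+τ, j, L-2j-τ]_x`. -/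
noncomputable def qTrinomialAB (x c : K3) (L : ℕ) (τ : ℤ) : K3 :=
  ∑ᶠ (j : ℤ), c ^ j * x ^ (j * (j + τ)) * trinK x (j + τ) j ((L : ℤ) - 2 * j - τ)

/-- Number of parts of `π` congruent to `r` mod 3. -/
def nu3 (r : ℕ) (π : List ℕ) : ℕ := (π.filter (fun x => x % 3 = r)).length

/-!
Let `G m` be the generating function of the Schur partitions with parts at most `m`. Splitting off
a largest part equal to `m` gives a recurrence for `G` in each residue class modulo 3, and
eliminating `G (3n)` and `G (3n + 1)` leaves the second-order recurrence
`G (3n + 2) = (1 + A q^(3n+1) + B q^(3n+2)) G (3n - 1) + A B q^(3n) (1 - q^(3n)) G (3n - 4)`.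

On the other side, put `u = j + τ` and `v = j`, which count the parts of residues `{1, 0}` and
`{2, 0}`. The `q`-trinomial sum becomes
`∑ A^u B^v q^(u(3u-1)/2 + v(3v+1)/2) [L; u, v, L-u-v]_{q³}`, whose summands satisfy the same
recurrence, by a second-order Pascal rule for `q`-multinomial coefficients of order 3.
-/

section Partitions

/-- Schur's gap condition on consecutive parts `x ≥ y`. -/
def SchurGap (x y : ℕ) : Prop := y + 3 ≤ x ∧ (x % 3 = 0 → y + 3 < x)

instance : IsTrans ℕ SchurGap :=
  ⟨fun _ _ _ hxy hyz => by unfold SchurGap at *; omega⟩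

/-- Partitions into parts at most `m` satisfying Schur's gap condition, written as decreasing
lists. -/
def schurPartitions (m : ℕ) : Set (List ℕ) :=
  {π | (∀ x ∈ π, 0 < x ∧ x ≤ m) ∧ π.IsChain SchurGap}

/-- The largest value allowed by Schur's gap condition for the part following `x`; `0` if no
positive part may follow. -/
def maxNextPart (x : ℕ) : ℕ := if x % 3 = 0 then x - 4 else x - 3

lemma schurGap_iff_le_maxNextPart {x y : ℕ} (hy : 0 < y) : SchurGap x y ↔ y ≤ maxNextPart x := by
  unfold SchurGap maxNextPart
  split_ifs <;> omega

lemma maxNextPart_lt {x : ℕ} (hx : 0 < x) : maxNextPart x < x := by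
  unfold maxNextPart
  split_ifs <;> omega

lemma cons_mem_schurPartitions {m x : ℕ} {π : List ℕ} :
    x :: π ∈ schurPartitions m ↔ (0 < x ∧ x ≤ m) ∧ π ∈ schurPartitions (maxNextPart x) := by
  simp only [schurPartitions, Set.mem_ofPred_eq, List.isChain_iff_pairwise, List.pairwise_cons,
    List.forall_mem_cons]
  constructor
  · rintro ⟨⟨hx, hπ⟩, hgap, hchain⟩
    exact ⟨hx, fun y hy => ⟨(hπ y hy).1,
      (schurGap_iff_le_maxNextPart (hπ y hy).1).1 (hgap y hy)⟩, hchain⟩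
  · rintro ⟨hx, hπ, hchain⟩
    have hlt := maxNextPart_lt hx.1
    exact ⟨⟨hx, fun y hy => ⟨(hπ y hy).1, by have := (hπ y hy).2; omega⟩⟩,
      fun y hy => (schurGap_iff_le_maxNextPart (hπ y hy).1).2 (hπ y hy).2, hchain⟩

lemma nil_mem_schurPartitions (m : ℕ) : [] ∈ schurPartitions m := by
  simp [schurPartitions]

lemma schurPartitions_zero : schurPartitions 0 = {[]} := by
  ext (_ | ⟨x, π⟩)
  · simp [nil_mem_schurPartitions]
  · simp only [cons_mem_schurPartitions, Set.mem_singleton_iff, reduceCtorEq, iff_false]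
    omega

lemma schurPartitions_succ (m : ℕ) :
    schurPartitions (m + 1) =
      schurPartitions m ∪ List.cons (m + 1) '' schurPartitions (maxNextPart (m + 1)) := by
  ext (_ | ⟨x, π⟩)
  · simp [nil_mem_schurPartitions]
  · rcases eq_or_ne x (m + 1) with rfl | hx
    · simp [cons_mem_schurPartitions]
    · have hle : x ≤ m + 1 ↔ x ≤ m := by omega
      simp [cons_mem_schurPartitions, hle, hx.symm]

lemma disjoint_schurPartitions_image_cons (m : ℕ) (s : Set (List ℕ)) :
    Disjoint (schurPartitions m) (List.cons (m + 1) '' s) := by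
  rw [Set.disjoint_left]
  rintro _ hπ ⟨π, -, rfl⟩
  have := (cons_mem_schurPartitions.1 hπ).1.2
  omega

lemma finite_schurPartitions (m : ℕ) : (schurPartitions m).Finite := by
  induction m using Nat.strong_induction_on with
  | _ m ih =>
    cases m with
    | zero => exact schurPartitions_zero ▸ Set.finite_singleton _
    | succ m =>
      rw [schurPartitions_succ]
      exact (ih m m.lt_succ_self).union ((ih _ (maxNextPart_lt m.succ_pos)).image _)

lemma nu3_cons (r x : ℕ) (π : List ℕ) : nu3 r (x :: π) = nu3 r [x] + nu3 r π := by
  simp only [nu3, ← List.length_append, ← List.filter_append, List.singleton_append]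

end Partitions

section GeneratingFunction

variable {R : Type*}

/-- The weight `A^(ν₁ + ν₀) B^(ν₂ + ν₀) q^σ` of a partition. -/
def schurWeight [CommSemiring R] (A B q : R) (π : List ℕ) : R :=
  A ^ (nu3 1 π + nu3 0 π) * B ^ (nu3 2 π + nu3 0 π) * q ^ π.sum

/-- The generating function of the Schur partitions with parts at most `m`. -/
noncomputable def schurGenFun [CommSemiring R] (A B q : R) (m : ℕ) : R :=
  ∑ᶠ π ∈ schurPartitions m, schurWeight A B q π

section CommSemiring

variable [CommSemiring R] (A B q : R)

lemma schurWeight_cons (x : ℕ) (π : List ℕ) :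
    schurWeight A B q (x :: π) = schurWeight A B q [x] * schurWeight A B q π := by
  simp only [schurWeight, nu3_cons _ x π, List.sum_cons, List.sum_nil]
  ring

lemma schurGenFun_zero : schurGenFun A B q 0 = 1 := by
  simp [schurGenFun, schurPartitions_zero, schurWeight, nu3]

lemma schurGenFun_succ (m : ℕ) :
    schurGenFun A B q (m + 1) = schurGenFun A B q m +
      schurWeight A B q [m + 1] * schurGenFun A B q (maxNextPart (m + 1)) := by
  have hfin := finite_schurPartitions
  unfold schurGenFun
  rw [schurPartitions_succ, finsum_mem_union (disjoint_schurPartitions_image_cons _ _) (hfin _)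
    ((hfin _).image _), finsum_mem_image List.cons_injective.injOn, mul_finsum_mem' _ _ (hfin _)]
  simp only [← schurWeight_cons]

lemma schurGenFun_three_mul_add_one (n : ℕ) :
    schurGenFun A B q (3 * n + 1) = schurGenFun A B q (3 * n) +
      A * q ^ (3 * n + 1) * schurGenFun A B q (3 * n - 2) := by
  have hmod : (3 * n + 1) % 3 = 1 := by omega
  simp [schurGenFun_succ A B q (3 * n), schurWeight, nu3, maxNextPart, hmod]

lemma schurGenFun_three_mul_add_two (n : ℕ) :
    schurGenFun A B q (3 * n + 2) = schurGenFun A B q (3 * n + 1) +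
      B * q ^ (3 * n + 2) * schurGenFun A B q (3 * n - 1) := by
  have hmod : (3 * n + 1 + 1) % 3 = 2 := by omega
  simp [schurGenFun_succ A B q (3 * n + 1), schurWeight, nu3, maxNextPart, hmod]

lemma schurGenFun_three_mul_add_three (n : ℕ) :
    schurGenFun A B q (3 * n + 3) = schurGenFun A B q (3 * n + 2) +
      A * B * q ^ (3 * n + 3) * schurGenFun A B q (3 * n - 1) := by
  have hmod : (3 * n + 2 + 1) % 3 = 0 := by omega
  simp [schurGenFun_succ A B q (3 * n + 2), schurWeight, nu3, maxNextPart, hmod]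

end CommSemiring

-- At `n = 0` the truncated index `3 * (n - 1) - 1` is harmless: its coefficient vanishes.
lemma schurGenFun_recurrence [CommRing R] (A B q : R) (n : ℕ) :
    schurGenFun A B q (3 * n + 2) =
      (1 + A * q ^ (3 * n + 1) + B * q ^ (3 * n + 2)) * schurGenFun A B q (3 * n - 1) +
      A * B * q ^ (3 * n) * (1 - q ^ (3 * n)) * schurGenFun A B q (3 * (n - 1) - 1) := by
  rw [schurGenFun_three_mul_add_two, schurGenFun_three_mul_add_one]
  cases n with
  | zero =>
    simp only [mul_zero, zero_tsub, pow_zero, sub_self, zero_mul]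
    ring
  | succ n =>
    have h₂ := schurGenFun_three_mul_add_two A B q n
    have h₃ := schurGenFun_three_mul_add_three A B q n
    simp only [Nat.mul_add_one, Nat.add_sub_cancel, Nat.reduceSubDiff] at *
    rw [h₃, h₂]
    ring

end GeneratingFunction

section QMultinomial

variable {K : Type*} [Field K] {x : K}

/-- The `q`-Pochhammer symbol `(x; x)_n`. -/
def qPochhammer (x : K) (n : ℕ) : K := ∏ t ∈ range n, (1 - x ^ (t + 1))

/-- The `q`-multinomial coefficient of order 3 with base `x`, zero unless all lower arguments are
nonnegative. As a quotient it is meaningful only when `x` is not a root of unity. -/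
def qMultinomial (x : K) (u v w : ℤ) : K :=
  if 0 ≤ u ∧ 0 ≤ v ∧ 0 ≤ w then
    qPochhammer x (u + v + w).toNat /
      (qPochhammer x u.toNat * qPochhammer x v.toNat * qPochhammer x w.toNat)
  else 0

/-- The Andrews–Baxter generalized `q`-trinomial coefficient with base `x` and parameter `c`. -/
noncomputable def qTrinomial (x c : K) (L : ℕ) (τ : ℤ) : K :=
  ∑ᶠ j : ℤ, c ^ j * x ^ (j * (j + τ)) * qMultinomial x (j + τ) j (L - 2 * j - τ)

lemma qPochhammer_succ (x : K) (n : ℕ) :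
    qPochhammer x (n + 1) = qPochhammer x n * (1 - x ^ (n + 1)) :=
  prod_range_succ _ n

lemma one_sub_zpow_ne_zero (hx : ¬IsOfFinOrder x) {n : ℤ} (hn : n ≠ 0) : 1 - x ^ n ≠ 0 :=
  fun h => hx (isOfFinOrder_iff_zpow_eq_one.2 ⟨n, hn, (sub_eq_zero.1 h).symm⟩)

lemma one_sub_pow_succ_ne_zero (hx : ¬IsOfFinOrder x) (n : ℕ) : 1 - x ^ (n + 1) ≠ 0 :=
  mod_cast one_sub_zpow_ne_zero hx (Nat.cast_ne_zero.2 n.succ_ne_zero)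

lemma qPochhammer_ne_zero (hx : ¬IsOfFinOrder x) (n : ℕ) : qPochhammer x n ≠ 0 :=
  prod_ne_zero_iff.2 fun t _ => one_sub_pow_succ_ne_zero hx t

lemma qMultinomial_natCast (x : K) (u v w : ℕ) :
    qMultinomial x u v w =
      qPochhammer x (u + v + w) / (qPochhammer x u * qPochhammer x v * qPochhammer x w) :=
  if_pos ⟨u.cast_nonneg, v.cast_nonneg, w.cast_nonneg⟩

lemma qMultinomial_eq_zero (x : K) {u v w : ℤ} (h : ¬(0 ≤ u ∧ 0 ≤ v ∧ 0 ≤ w)) :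
    qMultinomial x u v w = 0 :=
  if_neg h

lemma qMultinomial_zero (x : K) : qMultinomial x 0 0 0 = 1 := by
  simp [qMultinomial, qPochhammer]

lemma qMultinomial_swap_left (x : K) (u v w : ℤ) :
    qMultinomial x u v w = qMultinomial x v u w := by
  simp only [qMultinomial, add_comm u v, mul_comm (qPochhammer x u.toNat),
    and_left_comm (a := 0 ≤ u)]

lemma qMultinomial_swap_right (x : K) (u v w : ℤ) :
    qMultinomial x u v w = qMultinomial x u w v := by
  simp only [qMultinomial, add_right_comm u v, mul_right_comm _ (qPochhammer x v.toNat),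
    and_comm (a := 0 ≤ v)]

lemma one_sub_zpow_mul_qMultinomial (hx : ¬IsOfFinOrder x) (u v w : ℤ) :
    (1 - x ^ u) * qMultinomial x u v w =
      (1 - x ^ (u + v + w)) * qMultinomial x (u - 1) v w := by
  by_cases h : 0 ≤ u - 1 ∧ 0 ≤ v ∧ 0 ≤ w
  · obtain ⟨hu, hv, hw⟩ := h
    lift v to ℕ using hv
    lift w to ℕ using hw
    obtain ⟨a, ha⟩ := Int.eq_ofNat_of_zero_le hu
    obtain rfl : u = (a + 1 : ℕ) := by push_cast; omega
    have hsum : ((a + 1 : ℕ) : ℤ) + v + w = (a + v + w + 1 : ℕ) := by push_cast; ring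
    rw [ha, hsum, zpow_natCast, zpow_natCast, qMultinomial_natCast, qMultinomial_natCast,
      show a + 1 + v + w = a + v + w + 1 by ring, qPochhammer_succ, qPochhammer_succ]
    have hPa := qPochhammer_ne_zero hx a
    have hPv := qPochhammer_ne_zero hx v
    have hPw := qPochhammer_ne_zero hx w
    have ha' := one_sub_pow_succ_ne_zero hx a
    field_simp
  · rw [qMultinomial_eq_zero x h, mul_zero]
    rcases eq_or_ne u 0 with rfl | hu
    · simp
    · rw [qMultinomial_eq_zero x (by omega), mul_zero]

-- Multiplied by `1 - x ^ (u + v + w)`, every term becomes a multiple of `qMultinomial x u v w`.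
lemma qMultinomial_pascal (hx₀ : x ≠ 0) (hx : ¬IsOfFinOrder x) {u v w : ℤ} (h : u + v + w ≠ 0) :
    qMultinomial x u v w =
      qMultinomial x u v (w - 1) + x ^ (v + w) * qMultinomial x (u - 1) v w +
      x ^ (u + w) * qMultinomial x u (v - 1) w +
      x ^ w * (1 - x ^ (u + v + w - 1)) * qMultinomial x (u - 1) (v - 1) w := by
  have absorb_u := one_sub_zpow_mul_qMultinomial hx u v w
  have absorb_v (u : ℤ) : (1 - x ^ v) * qMultinomial x u v w =
      (1 - x ^ (u + v + w)) * qMultinomial x u (v - 1) w := by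
    rw [qMultinomial_swap_left, one_sub_zpow_mul_qMultinomial hx, qMultinomial_swap_left,
      add_comm v u]
  have absorb_w : (1 - x ^ w) * qMultinomial x u v w =
      (1 - x ^ (u + v + w)) * qMultinomial x u v (w - 1) := by
    rw [qMultinomial_swap_right, qMultinomial_swap_left, one_sub_zpow_mul_qMultinomial hx,
      qMultinomial_swap_left, qMultinomial_swap_right, show w + u + v = u + v + w by ring]
  have absorb_uv : (1 - x ^ u) * (1 - x ^ v) * qMultinomial x u v w =
      (1 - x ^ (u + v + w)) * (1 - x ^ (u + v + w - 1)) * qMultinomial x (u - 1) (v - 1) w := by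
    rw [show u + v + w - 1 = u - 1 + v + w by ring, mul_assoc _ (1 - x ^ (u - 1 + v + w)),
      ← absorb_v]
    linear_combination (1 - x ^ v) * absorb_u
  have hsum : x ^ (u + v + w) = x ^ u * x ^ v * x ^ w := by
    rw [zpow_add₀ hx₀, zpow_add₀ hx₀]
  have hvw : x ^ (v + w) = x ^ v * x ^ w := zpow_add₀ hx₀ v w
  have huw : x ^ (u + w) = x ^ u * x ^ w := zpow_add₀ hx₀ u w
  apply mul_left_cancel₀ (one_sub_zpow_ne_zero hx h)
  have hv := absorb_v u
  linear_combination absorb_w + x ^ (v + w) * absorb_u + x ^ (u + w) * hv + x ^ w * absorb_uv -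
    qMultinomial x u v w * (hsum + (1 - x ^ u) * hvw + (1 - x ^ v) * huw)

end QMultinomial

section Pentagonal

lemma natCast_pentagonal_sub_one (k : ℤ) :
    (pentagonal (k - 1) : ℤ) = pentagonal k + (2 - 3 * k) := by
  linarith [two_mul_natCast_pentagonal (k - 1), two_mul_natCast_pentagonal k]

lemma natCast_pentagonal_neg_sub_one (k : ℤ) :
    (pentagonal (-(k - 1)) : ℤ) = pentagonal (-k) + (1 - 3 * k) := by
  linarith [two_mul_natCast_pentagonal_neg (k - 1), two_mul_natCast_pentagonal_neg k]

lemma natCast_pentagonal_add_natCast_pentagonal_neg (j τ : ℤ) :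
    (pentagonal (j + τ) + pentagonal (-j) : ℤ) = pentagonal τ + 3 * (j * (j + τ)) := by
  linarith [two_mul_natCast_pentagonal (j + τ), two_mul_natCast_pentagonal_neg j,
    two_mul_natCast_pentagonal τ]

end Pentagonal

section DoubleSum

variable {K : Type*} [Field K] {A B q : K}

/-- The monomial `A^u B^v q^(u(3u-1)/2 + v(3v+1)/2)`. -/
def schurMonomial (A B q : K) (u v : ℤ) : K :=
  A ^ u * B ^ v * q ^ (pentagonal u + pentagonal (-v) : ℤ)

/-- The summand `A^u B^v q^(u(3u-1)/2 + v(3v+1)/2) [n; u, v, n-u-v]_{q³}`, indexed by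
`p = (u, v)`. -/
def schurTerm (A B q : K) (n : ℤ) (p : ℤ × ℤ) : K :=
  schurMonomial A B q p.1 p.2 * qMultinomial (q ^ 3) p.1 p.2 (n - p.1 - p.2)

/-- The sum of the terms `schurTerm A B q n (u, v)` over all integers `u` and `v`: the series side
of the theorem, before it is grouped by `τ = u - v`. -/
noncomputable def schurDoubleSum (A B q : K) (n : ℤ) : K :=
  ∑ᶠ p, schurTerm A B q n p

lemma mul_schurMonomial_sub_one_left (hA : A ≠ 0) (hq₀ : q ≠ 0) (B : K) (n u v : ℤ) :
    A * q ^ (3 * n + 1) * schurMonomial A B q (u - 1) v =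
      schurMonomial A B q u v * (q ^ 3) ^ (n + 1 - u) := by
  have hexp : q ^ (3 * n + 1) * q ^ (pentagonal (u - 1) + pentagonal (-v) : ℤ) =
      q ^ (pentagonal u + pentagonal (-v) : ℤ) * (q ^ 3) ^ (n + 1 - u) := by
    rw [natCast_pentagonal_sub_one, ← zpow_ofNat, ← zpow_mul, ← zpow_add₀ hq₀, ← zpow_add₀ hq₀]
    congr 1
    ring
  simp only [schurMonomial, zpow_sub_one₀ hA]
  linear_combination (norm := field) A ^ u * B ^ v * hexp

lemma mul_schurMonomial_sub_one_right (hB : B ≠ 0) (hq₀ : q ≠ 0) (A : K) (n u v : ℤ) :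
    B * q ^ (3 * n + 2) * schurMonomial A B q u (v - 1) =
      schurMonomial A B q u v * (q ^ 3) ^ (n + 1 - v) := by
  have hexp : q ^ (3 * n + 2) * q ^ (pentagonal u + pentagonal (-(v - 1)) : ℤ) =
      q ^ (pentagonal u + pentagonal (-v) : ℤ) * (q ^ 3) ^ (n + 1 - v) := by
    rw [natCast_pentagonal_neg_sub_one, ← zpow_ofNat, ← zpow_mul, ← zpow_add₀ hq₀,
      ← zpow_add₀ hq₀]
    congr 1
    ring
  simp only [schurMonomial, zpow_sub_one₀ hB]
  linear_combination (norm := field) A ^ u * B ^ v * hexp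

lemma mul_schurMonomial_sub_one_sub_one (hA : A ≠ 0) (hB : B ≠ 0) (hq₀ : q ≠ 0) (n u v : ℤ) :
    A * B * q ^ (3 * n) * schurMonomial A B q (u - 1) (v - 1) =
      schurMonomial A B q u v * (q ^ 3) ^ (n + 1 - u - v) := by
  have hleft := mul_schurMonomial_sub_one_left hA hq₀ B n u (v - 1)
  have hright := mul_schurMonomial_sub_one_right hB hq₀ A (-1) u v
  have hexp : q ^ (3 * n) = q ^ (3 * -1 + 2 : ℤ) * q ^ (3 * n + 1) := by
    rw [← zpow_add₀ hq₀]
    congr 1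
    ring
  have hexp₃ : (q ^ 3) ^ (n + 1 - u - v) = (q ^ 3) ^ (-1 + 1 - v) * (q ^ 3) ^ (n + 1 - u) := by
    rw [← zpow_add₀ (pow_ne_zero 3 hq₀)]
    congr 1
    ring
  rw [hexp, hexp₃]
  linear_combination B * q ^ (3 * -1 + 2 : ℤ) * hleft + (q ^ 3) ^ (n + 1 - u) * hright

lemma schurTerm_support_subset (A B q : K) (n : ℤ) :
    (schurTerm A B q n).support ⊆ Set.Icc (0, 0) (n, n) := by
  intro p hp
  by_contra hmem
  refine hp (mul_eq_zero_of_right _ (qMultinomial_eq_zero _ fun h => hmem ?_))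
  simp only [Set.mem_Icc, Prod.le_def]
  omega

lemma hasFiniteSupport_schurTerm (A B q : K) (n : ℤ) : (schurTerm A B q n).HasFiniteSupport :=
  (Set.finite_Icc _ _).subset (schurTerm_support_subset A B q n)

lemma schurDoubleSum_zero (A B q : K) : schurDoubleSum A B q 0 = 1 := by
  have hsupp : (schurTerm A B q 0).support ⊆ {(0, 0)} := by
    simpa using schurTerm_support_subset A B q 0
  rw [schurDoubleSum, finsum_eq_single _ (0, 0) fun p hp => by_contra fun h => hp (hsupp h)]
  simp [schurTerm, schurMonomial, qMultinomial_zero, pentagonal_def]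

lemma schurTerm_add_one (hA : A ≠ 0) (hB : B ≠ 0) (hq₀ : q ≠ 0) (hq : ¬IsOfFinOrder q) {n : ℤ}
    (hn : n + 1 ≠ 0) (p : ℤ × ℤ) :
    schurTerm A B q (n + 1) p =
      schurTerm A B q n p + A * q ^ (3 * n + 1) * schurTerm A B q n (p - (1, 0)) +
      B * q ^ (3 * n + 2) * schurTerm A B q n (p - (0, 1)) +
      A * B * q ^ (3 * n) * (1 - q ^ (3 * n)) * schurTerm A B q (n - 1) (p - (1, 1)) := by
  obtain ⟨u, v⟩ := p
  have hq₃ : ¬IsOfFinOrder (q ^ 3) := fun h => hq (h.of_pow three_ne_zero)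
  obtain ⟨w, hw⟩ : ∃ w, n + 1 - u - v = w := ⟨_, rfl⟩
  have hpascal := qMultinomial_pascal (pow_ne_zero 3 hq₀) hq₃ (show u + v + w ≠ 0 by omega)
  rw [show v + w = n + 1 - u by omega, show u + w = n + 1 - v by omega,
    show u + v + w - 1 = n by omega] at hpascal
  have hleft := mul_schurMonomial_sub_one_left hA hq₀ B n u v
  have hright := mul_schurMonomial_sub_one_right hB hq₀ A n u v
  have hboth := mul_schurMonomial_sub_one_sub_one hA hB hq₀ n u v
  have hpow : q ^ (3 * n) = (q ^ 3) ^ n := by rw [zpow_mul, zpow_ofNat]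
  rw [hw] at hboth
  simp only [schurTerm, Prod.mk_sub_mk, sub_zero]
  rw [hw, show n - u - v = w - 1 by omega, show n - (u - 1) - v = w by omega,
    show n - u - (v - 1) = w by omega, show n - 1 - (u - 1) - (v - 1) = w by omega]
  linear_combination schurMonomial A B q u v * hpascal - qMultinomial (q ^ 3) (u - 1) v w * hleft -
    qMultinomial (q ^ 3) u (v - 1) w * hright -
    (1 - q ^ (3 * n)) * qMultinomial (q ^ 3) (u - 1) (v - 1) w * hboth +
    schurMonomial A B q u v * (q ^ 3) ^ w * qMultinomial (q ^ 3) (u - 1) (v - 1) w * hpow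

lemma schurDoubleSum_add_one (hA : A ≠ 0) (hB : B ≠ 0) (hq₀ : q ≠ 0) (hq : ¬IsOfFinOrder q)
    {n : ℤ} (hn : n + 1 ≠ 0) :
    schurDoubleSum A B q (n + 1) =
      (1 + A * q ^ (3 * n + 1) + B * q ^ (3 * n + 2)) * schurDoubleSum A B q n +
      A * B * q ^ (3 * n) * (1 - q ^ (3 * n)) * schurDoubleSum A B q (n - 1) := by
  have hfin (c : K) (m : ℤ) (a : ℤ × ℤ) :
      (fun p => c * schurTerm A B q m (p - a)).HasFiniteSupport :=
    ((hasFiniteSupport_schurTerm A B q m).fun_comp_of_injective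
      sub_left_injective).fun_mul_right _
  have hsum (c : K) (m : ℤ) (a : ℤ × ℤ) :
      ∑ᶠ p, c * schurTerm A B q m (p - a) = c * schurDoubleSum A B q m := by
    rw [← mul_finsum]
    exact congrArg (c * ·) (finsum_comp_equiv (Equiv.subRight a))
  calc
    schurDoubleSum A B q (n + 1) = _ := finsum_congr (schurTerm_add_one hA hB hq₀ hq hn)
    _ = schurDoubleSum A B q n + A * q ^ (3 * n + 1) * schurDoubleSum A B q n +
        B * q ^ (3 * n + 2) * schurDoubleSum A B q n +
        A * B * q ^ (3 * n) * (1 - q ^ (3 * n)) * schurDoubleSum A B q (n - 1) := by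
      have hterm := hasFiniteSupport_schurTerm A B q n
      rw [finsum_add_distrib ((hterm.fun_add (hfin _ _ _)).fun_add (hfin _ _ _)) (hfin _ _ _),
        finsum_add_distrib (hterm.fun_add (hfin _ _ _)) (hfin _ _ _),
        finsum_add_distrib hterm (hfin _ _ _), hsum, hsum, hsum, ← schurDoubleSum]
    _ = _ := by ring

lemma schurGenFun_eq_schurDoubleSum (hA : A ≠ 0) (hB : B ≠ 0) (hq₀ : q ≠ 0)
    (hq : ¬IsOfFinOrder q) (n : ℕ) :
    schurGenFun A B q (3 * n - 1) = schurDoubleSum A B q n := by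
  have hrec (n : ℕ) : schurDoubleSum A B q (n + 1 : ℕ) =
      (1 + A * q ^ (3 * n + 1) + B * q ^ (3 * n + 2)) * schurDoubleSum A B q n +
      A * B * q ^ (3 * n) * (1 - q ^ (3 * n)) * schurDoubleSum A B q (n - 1) :=
    mod_cast schurDoubleSum_add_one hA hB hq₀ hq (n := n) (by omega)
  induction n using Nat.twoStepInduction with
  | zero => simp [schurGenFun_zero, schurDoubleSum_zero]
  | one =>
    rw [hrec 0, show 3 * 1 - 1 = 3 * 0 + 2 from rfl, schurGenFun_recurrence]
    simp [schurGenFun_zero, schurDoubleSum_zero]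
  | more n ih₀ ih₁ =>
    rw [hrec (n + 1), show 3 * (n + 2) - 1 = 3 * (n + 1) + 2 by omega, schurGenFun_recurrence, ih₁,
      Nat.add_sub_cancel, ih₀, Nat.cast_succ, add_sub_cancel_right]

lemma qTrinomial_term_eq_schurTerm (hA : A ≠ 0) (hq₀ : q ≠ 0) (L : ℕ) (τ j : ℤ) :
    A ^ τ * q ^ (τ * (3 * τ - 1) / 2) *
      ((A * B) ^ j * (q ^ 3) ^ (j * (j + τ)) *
        qMultinomial (q ^ 3) (j + τ) j (L - 2 * j - τ)) =
      schurTerm A B q L (j + τ, j) := by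
  have hexp : q ^ (pentagonal (j + τ) + pentagonal (-j) : ℤ) =
      q ^ (τ * (3 * τ - 1) / 2) * (q ^ 3) ^ (j * (j + τ)) := by
    rw [natCast_pentagonal_add_natCast_pentagonal_neg, zpow_add₀ hq₀, natCast_pentagonal, zpow_mul,
      zpow_ofNat]
  rw [schurTerm, schurMonomial, hexp, zpow_add₀ hA, mul_zpow,
    show (L : ℤ) - 2 * j - τ = L - (j + τ) - j by ring]
  ring

lemma finsum_qTrinomial_eq_schurDoubleSum (hA : A ≠ 0) (hq₀ : q ≠ 0) (B : K) (L : ℕ) :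
    ∑ᶠ τ : ℤ, A ^ τ * q ^ (τ * (3 * τ - 1) / 2) * qTrinomial (q ^ 3) (A * B) L τ =
      schurDoubleSum A B q L := by
  let e : ℤ × ℤ ≃ ℤ × ℤ :=
    ((Equiv.prodComm ℤ ℤ).trans (Equiv.prodShear (.refl ℤ) Equiv.addLeft)).trans (.prodComm ℤ ℤ)
  have hfin : (fun p => schurTerm A B q L (e p)).HasFiniteSupport :=
    (hasFiniteSupport_schurTerm A B q L).fun_comp_of_injective e.injective
  calc
    _ = ∑ᶠ (τ : ℤ) (j : ℤ), schurTerm A B q L (j + τ, j) := by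
      simp only [qTrinomial, mul_finsum, qTrinomial_term_eq_schurTerm hA hq₀]
    _ = ∑ᶠ p : ℤ × ℤ, schurTerm A B q L (e p) := (finsum_curry _ hfin).symm
    _ = schurDoubleSum A B q L := finsum_comp_equiv e

end DoubleSum

theorem schur_qtrinomial_representation_general {K : Type*} [Field K] {A B q : K} (hA : A ≠ 0)
    (hB : B ≠ 0) (hq₀ : q ≠ 0) (hq : ¬IsOfFinOrder q) (L : ℕ) :
    ∑ᶠ π ∈ schurPartitions (3 * L - 1),
      A ^ (nu3 1 π + nu3 0 π) * B ^ (nu3 2 π + nu3 0 π) * q ^ π.sum =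
    ∑ᶠ τ : ℤ, A ^ τ * q ^ (τ * (3 * τ - 1) / 2) * qTrinomial (q ^ 3) (A * B) L τ :=
  (schurGenFun_eq_schurDoubleSum hA hB hq₀ hq L).trans
    (finsum_qTrinomial_eq_schurDoubleSum hA hq₀ B L).symm

section Indeterminates

variable {σ R S : Type*} [CommSemiring R] [Nontrivial R] [CommSemiring S]
  [Algebra (MvPolynomial σ R) S] [FaithfulSMul (MvPolynomial σ R) S]

lemma algebraMap_X_ne_zero (i : σ) : algebraMap (MvPolynomial σ R) S (MvPolynomial.X i) ≠ 0 :=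
  (FaithfulSMul.algebraMap_eq_zero_iff _ _).not.2 (MvPolynomial.X_ne_zero i)

lemma not_isOfFinOrder_algebraMap_X (i : σ) :
    ¬IsOfFinOrder (algebraMap (MvPolynomial σ R) S (MvPolynomial.X i)) := by
  rw [isOfFinOrder_iff_pow_eq_one]
  rintro ⟨n, hn, h⟩
  rw [← map_pow, FaithfulSMul.algebraMap_eq_one_iff] at h
  simpa [hn.ne'] using congrArg MvPolynomial.totalDegree h

end Indeterminates

/-- The representation (5.16): for `L ≥ 1`, the generating function of partitions into
parts `≤ 3L - 1` satisfying the Schur gap conditions (consecutive parts differ by at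
least 3, strictly more when the larger part is a multiple of 3), weighted by
`A^{ν_1 + ν_0} B^{ν_2 + ν_0} q^{σ}`, equals
`∑_{τ ∈ ℤ} A^τ q^{τ(3τ-1)/2} (L; q³; τ)_{c = AB}`. -/
theorem schur_qtrinomial_representation (L : ℕ) (hL : 1 ≤ L) :
    (∑ᶠ π ∈ {π : List ℕ | (∀ x ∈ π, 0 < x ∧ x ≤ 3 * L - 1) ∧
        π.Chain' (fun x y => y + 3 ≤ x ∧ (x % 3 = 0 → y + 3 < x))},
      Av ^ (nu3 1 π + nu3 0 π) * Bv ^ (nu3 2 π + nu3 0 π) * qv ^ π.sum) =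
    ∑ᶠ (τ : ℤ), Av ^ τ * qv ^ (τ * (3 * τ - 1) / 2) * qTrinomialAB (qv ^ 3) (Av * Bv) L τ := by
  exact schur_qtrinomial_representation_general (algebraMap_X_ne_zero 0) (algebraMap_X_ne_zero 1)
    (algebraMap_X_ne_zero 2) (not_isOfFinOrder_algebraMap_X 2) L
end

section
/- The number of partitions of a positive integer n into distinct parts congruent to 2, 4 or 5 modulo 6 equals the number of partitions of n into parts, none equal to 1 or 3, such that any two consecutive parts differ by at least 6, with the difference strictly greater than 6 whenever the larger part is congruent to 0, 1 or 3 modulo 6. -/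
/-!
Call a part `m` secondary if `m ≡ 0, 1, 3 (mod 6)` and primary otherwise, and let `G_m(x)` be the
generating function of the partitions on the gap side with parts at most `m`, where `q` marks the
size, a primary part carries `x`, and a secondary part carries `x²` (a secondary residue is the sum
of two primary ones: `0 = 2 + 4`, `1 = 2 + 5`, `3 = 4 + 5`).

Splitting on the largest part, for `4 ≤ r ≤ 9` the sequence `G_{6k+r}` is obtained from `G_{6k+r-1}`
by `1 + x² q^r S` if `r` is secondary and by the inverse of `1 - x q^r S` if `r` is primary, where
`(S u)_k = q^{6k} u_{k-1}`. These operators commute, so the sequence `G_{6k+3}` satisfies a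
recurrence which factors on both sides. Comparing it with the recursion at `x q⁶` gives
`(1 + x q²)(1 + x q⁴)(1 + x q⁵) G_{6k+5}(x q⁶) = G_{6k+15}(x) - x q^{6k+14} G_{6k+9}(x)`.
Modulo a high power of `q` the right side is `G_{6k+5}(x)`, and iterating turns `G` into the product
over the parts congruent to `2, 4, 5` modulo `6`.
-/

open Finset

section GapChains

variable (p : ℕ → Prop) [DecidablePred p] (e : ℕ → ℕ)

/-- The lists of positive integers satisfying `p`, all at most the given bound, in which a part `x`
is followed by a part `y` only if `y + e x < x`. The recursion splits on whether the bound itself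
occurs; truncated subtraction is harmless, since only the empty list can then follow. -/
def gapChains : ℕ → Finset (List ℕ)
  | 0 => {[]}
  | m + 1 =>
    if p (m + 1) then
      gapChains m ∪ (gapChains (m - e (m + 1))).image (List.cons (m + 1))
    else gapChains m

/-- The generating function of `gapChains`, each list being weighted by the product of the weights
`w` of its parts. -/
def gapGF {R : Type*} [CommSemiring R] (w : ℕ → R) (m : ℕ) : R :=
  ∑ l ∈ gapChains p e m, (l.map w).prod

variable {p e}

theorem gapChain_cons_iff {a : ℕ} {l : List ℕ} :
    (a :: l).IsChain (fun x y => y + e x < x) ↔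
      (∀ y ∈ l, y + e a < a) ∧ l.IsChain (fun x y => y + e x < x) := by
  have : IsTrans ℕ (fun x y => y + e x < x) := ⟨fun _ _ _ _ _ => by omega⟩
  simp only [List.isChain_iff_pairwise, List.pairwise_cons]

theorem le_of_mem_gapChains {m : ℕ} {l : List ℕ} (hl : l ∈ gapChains p e m) :
    ∀ x ∈ l, x ≤ m := by
  induction m using Nat.strong_induction_on generalizing l with
  | _ m ih =>
    rcases m with _ | m
    · simp_all [gapChains]
    · have of_le {t : List ℕ} {j : ℕ} (hj : j ≤ m) (ht : t ∈ gapChains p e j) :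
          ∀ x ∈ t, x ≤ m + 1 :=
        fun x hx => (ih j (by omega) ht x hx).trans (by omega)
      rw [gapChains] at hl
      split_ifs at hl with hm
      · rcases mem_union.1 hl with hl | hl
        · exact of_le le_rfl hl
        · obtain ⟨t, ht, rfl⟩ := mem_image.1 hl
          exact List.forall_mem_cons.2 ⟨le_rfl, of_le (Nat.sub_le ..) ht⟩
      · exact of_le le_rfl hl

theorem cons_mem_gapChains_iff (hp : ¬ p 0) {m a : ℕ} {l : List ℕ} :
    a :: l ∈ gapChains p e m ↔ a ≤ m ∧ p a ∧ l ∈ gapChains p e (a - 1 - e a) := by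
  induction m with
  | zero =>
    simp only [gapChains, mem_singleton, reduceCtorEq, false_iff]
    rintro ⟨ha, hpa, -⟩
    exact hp (Nat.le_zero.1 ha ▸ hpa)
  | succ m ih =>
    rw [gapChains]
    rcases eq_or_ne a (m + 1) with rfl | ha
    · have hnot : (m + 1) :: l ∉ gapChains p e m :=
        fun h => absurd (le_of_mem_gapChains h _ List.mem_cons_self) (by omega)
      split_ifs with hm <;> simp [hm, hnot]
    · have hle : a ≤ m + 1 ↔ a ≤ m := by omega
      split_ifs <;> simp [ih, hle, ha.symm]

theorem nil_mem_gapChains (m : ℕ) : [] ∈ gapChains p e m := by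
  induction m with
  | zero => simp [gapChains]
  | succ m ih => rw [gapChains]; split_ifs <;> simp [ih]

theorem mem_gapChains (hp : ¬ p 0) {m : ℕ} {l : List ℕ} :
    l ∈ gapChains p e m ↔
      l.IsChain (fun x y => y + e x < x) ∧ (∀ x ∈ l, p x) ∧ ∀ x ∈ l, x ≤ m := by
  induction l generalizing m with
  | nil => simp [nil_mem_gapChains]
  | cons a l ih =>
    rw [cons_mem_gapChains_iff hp, ih, gapChain_cons_iff, List.forall_mem_cons,
      List.forall_mem_cons]
    constructor
    · rintro ⟨ham, hpa, hl, hpl, hle⟩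
      have hlt : ∀ y ∈ l, y + e a < a := fun y hy => by
        have := hle y hy
        have : y ≠ 0 := fun h => hp (h ▸ hpl y hy)
        omega
      exact ⟨⟨hlt, hl⟩, ⟨hpa, hpl⟩, ham, fun y hy => by have := hlt y hy; omega⟩
    · rintro ⟨⟨hlt, hl⟩, ⟨hpa, hpl⟩, ham, -⟩
      exact ⟨ham, hpa, hl, hpl, fun y hy => by have := hlt y hy; omega⟩

section CommSemiring

variable {R : Type*} [CommSemiring R] {w : ℕ → R} {m : ℕ}

theorem gapGF_zero : gapGF p e w 0 = 1 := by simp [gapGF, gapChains]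

theorem gapGF_succ_of_neg (hm : ¬ p (m + 1)) : gapGF p e w (m + 1) = gapGF p e w m := by
  simp only [gapGF, gapChains, if_neg hm]

theorem gapGF_succ_of_pos (hm : p (m + 1)) :
    gapGF p e w (m + 1) = gapGF p e w m + w (m + 1) * gapGF p e w (m - e (m + 1)) := by
  have hdisj : Disjoint (gapChains p e m)
      ((gapChains p e (m - e (m + 1))).image (List.cons (m + 1))) := by
    simp only [disjoint_right, mem_image, forall_exists_index, and_imp]
    rintro _ t - rfl ht
    exact absurd (le_of_mem_gapChains ht _ List.mem_cons_self) (by omega)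
  simp only [gapGF]
  rw [gapChains, if_pos hm, sum_union hdisj, sum_image List.cons_injective.injOn, mul_sum]
  simp only [List.map_cons, List.prod_cons]

theorem gapGF_gap_zero (m : ℕ) :
    gapGF p (fun _ => 0) w m = ∏ i ∈ range m, if p (i + 1) then 1 + w (i + 1) else 1 := by
  induction m with
  | zero => simp [gapGF_zero]
  | succ m ih =>
    rw [prod_range_succ, ← ih]
    split_ifs with hm
    · rw [gapGF_succ_of_pos hm, Nat.sub_zero]
      ring
    · rw [gapGF_succ_of_neg hm, mul_one]

end CommSemiring

theorem ncard_gapChain_eq_coeff (hp : ¬ p 0) {n m : ℕ} (hnm : n ≤ m) :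
    ({l : List ℕ | l.IsChain (fun x y => y + e x < x) ∧ (∀ x ∈ l, p x) ∧ l.sum = n}.ncard : ℤ) =
      PowerSeries.coeff n (gapGF p e (fun i => (PowerSeries.X : PowerSeries ℤ) ^ i) m) := by
  have hset : {l : List ℕ | l.IsChain (fun x y => y + e x < x) ∧ (∀ x ∈ l, p x) ∧ l.sum = n} =
      {l ∈ gapChains p e m | n = l.sum} := by
    ext l
    simp only [coe_filter, mem_gapChains hp, Set.mem_ofPred_eq]
    constructor
    · rintro ⟨hl, hpl, rfl⟩
      exact ⟨⟨hl, hpl, fun x hx => (List.single_le_sum (by simp) x hx).trans hnm⟩, rfl⟩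
    · rintro ⟨⟨hl, hpl, -⟩, hsum⟩
      exact ⟨hl, hpl, hsum.symm⟩
  have hprod (l : List ℕ) :
      (l.map fun i => (PowerSeries.X : PowerSeries ℤ) ^ i).prod = PowerSeries.X ^ l.sum := by
    induction l with
    | nil => simp
    | cons a l ih => simp [ih, pow_add]
  rw [hset, Set.ncard_coe_finset]
  simp only [gapGF, hprod, map_sum, PowerSeries.coeff_X_pow, sum_boole]

section CommRing

variable {R : Type*} [CommRing R] {w : ℕ → R}

theorem dvd_gapGF_sub_one {d : R} (hd : ∀ i, d ∣ w i) (m : ℕ) : d ∣ gapGF p e w m - 1 := by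
  induction m with
  | zero => simp [gapGF_zero]
  | succ m ih =>
    by_cases hm : p (m + 1)
    · rw [gapGF_succ_of_pos hm, add_sub_right_comm]
      exact dvd_add ih ((hd _).mul_right _)
    · rwa [gapGF_succ_of_neg hm]

theorem dvd_gapGF_sub_gapGF {d : R} {m n : ℕ} (hmn : m ≤ n) (hd : ∀ i, m < i → d ∣ w i) :
    d ∣ gapGF p e w n - gapGF p e w m := by
  induction n, hmn using Nat.le_induction with
  | base => simp
  | succ n hmn ih =>
    by_cases hn : p (n + 1)
    · rw [gapGF_succ_of_pos hn, add_sub_right_comm]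
      exact dvd_add ih ((hd _ (by omega)).mul_right _)
    · rwa [gapGF_succ_of_neg hn]

end CommRing

end GapChains

/-- A secondary part: one whose residue modulo `6` is the sum of two of the residues `2, 4, 5`. -/
abbrev IsSecondary (m : ℕ) : Prop := m % 6 = 0 ∨ m % 6 = 1 ∨ m % 6 = 3

/-- The parts allowed in the partitions with the gap condition. -/
abbrev IsGollnitzPart (m : ℕ) : Prop := 0 < m ∧ m ≠ 1 ∧ m ≠ 3

/-- The gap condition of Göllnitz's theorem in the form used by `gapChains`: a part `x` is followed
by a part smaller than `x - gollnitzGap x`. -/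
def gollnitzGap (m : ℕ) : ℕ := if IsSecondary m then 6 else 5

theorem add_gollnitzGap_lt_iff {x y : ℕ} :
    y + gollnitzGap x < x ↔ y + 6 ≤ x ∧ (IsSecondary x → y + 6 < x) := by
  unfold gollnitzGap
  split_ifs <;> omega

section GollnitzGF

section CommSemiring

variable {R : Type*} [CommSemiring R] (x q : R)

/-- The weight of a part in the refined generating function: `q` marks the size, and a secondary
part counts as two primary ones in the exponent of `x`. -/
def gollnitzWeight (m : ℕ) : R := x ^ (if IsSecondary m then 2 else 1) * q ^ m

/-- The refined generating function `G_m(x)` of the partitions satisfying the gap condition, with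
all parts at most `m`. -/
def gollnitzGF (m : ℕ) : R := gapGF IsGollnitzPart gollnitzGap (gollnitzWeight x q) m

local notation "G" => gollnitzGF x q

theorem gollnitzGF_zero : G 0 = 1 := gapGF_zero

theorem gollnitzGF_one : G 1 = 1 :=
  (gapGF_succ_of_neg (by decide)).trans (gollnitzGF_zero x q)

theorem gollnitzGF_three : G 3 = G 2 := gapGF_succ_of_neg (by decide)

theorem gollnitzGF_of_primary {m : ℕ} (hm : ¬ IsSecondary m) :
    G m = G (m - 1) + x * q ^ m * G (m - 6) := by
  obtain ⟨m, rfl⟩ : ∃ j, m = j + 1 := ⟨m - 1, by omega⟩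
  simp only [gollnitzGF]
  rw [gapGF_succ_of_pos (by omega), gollnitzWeight, gollnitzGap, if_neg hm, if_neg hm, pow_one,
    Nat.add_sub_cancel, Nat.add_sub_add_right m 1 5]

theorem gollnitzGF_of_secondary {m : ℕ} (hm : IsSecondary m) (hm6 : 6 ≤ m) :
    G m = G (m - 1) + x ^ 2 * q ^ m * G (m - 7) := by
  obtain ⟨m, rfl⟩ : ∃ j, m = j + 1 := ⟨m - 1, by omega⟩
  simp only [gollnitzGF]
  rw [gapGF_succ_of_pos (by omega), gollnitzWeight, gollnitzGap, if_pos hm, if_pos hm,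
    Nat.add_sub_cancel, Nat.add_sub_add_right m 1 6]

theorem gollnitzGF_add_six {m : ℕ} (hm : ¬ IsSecondary m) :
    G (m + 6) = G (m + 5) + x * q ^ (m + 6) * G m :=
  gollnitzGF_of_primary x q (by omega)

theorem gollnitzGF_add_seven {m : ℕ} (hm : IsSecondary (m + 1)) :
    G (m + 7) = G (m + 6) + x ^ 2 * q ^ (m + 7) * G m :=
  gollnitzGF_of_secondary x q (by omega) (by omega)

/-- The product of `1 + x q^i` over the first three primary parts `i = 2, 4, 5`. -/
def primaryFactor : R := (1 + x * q ^ 2) * (1 + x * q ^ 4) * (1 + x * q ^ 5)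

theorem gapGF_primary_eq_prod (k : ℕ) :
    gapGF (fun m => m % 6 = 2 ∨ m % 6 = 4 ∨ m % 6 = 5) (fun _ => 0) (fun i => x * q ^ i) (6 * k) =
      ∏ i ∈ range k, primaryFactor (x * q ^ (6 * i)) q := by
  rw [gapGF_gap_zero]
  induction k with
  | zero => simp
  | succ k ih =>
    have hmod (r : ℕ) : (6 * k + r + 1) % 6 = (r + 1) % 6 := by omega
    rw [prod_range_succ, ← ih, mul_add_one, prod_range_add]
    simp +decide only [hmod, prod_range_succ, prod_range_zero, if_true, if_false, one_mul, mul_one,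
      primaryFactor]
    ring

end CommSemiring

section CommRing

variable {R : Type*} [CommRing R] (x q : R)

local notation "G" => gollnitzGF x q

/-- `1 + x² q^s S` commutes with the inverse of `1 - x q^(s - 1) S`; at `s = 0` the truncated
subtraction makes `G_{-2}` equal to `G_0 = 1`, as it should be. -/
theorem gollnitzGF_exchange {s : ℕ} (hs : s % 6 = 0 ∨ s % 6 = 3) (hs3 : s ≠ 3) :
    G (s + 6) - x * q ^ (s + 5) * G s = G (s + 4) + x ^ 2 * q ^ (s + 6) * G (s - 2) := by
  have h₆ : G (s + 6) = G (s + 5) + x ^ 2 * q ^ (s + 6) * G (s - 1) :=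
    gollnitzGF_of_secondary x q (by omega) (by omega)
  have h₅ : G (s + 5) = G (s + 4) + x * q ^ (s + 5) * G (s - 1) :=
    gollnitzGF_of_primary x q (by omega)
  rcases s.eq_zero_or_pos with rfl | hpos
  · rw [h₆, h₅]
    ring
  · obtain ⟨s, rfl⟩ : ∃ j, s = j + 6 := ⟨s - 6, by omega⟩
    have h₀ : G (s + 6) = G (s + 5) + x ^ 2 * q ^ (s + 6) * G (s - 1) :=
      gollnitzGF_of_secondary x q (by omega) (by omega)
    have h₁ : G (s + 5) = G (s + 4) + x * q ^ (s + 5) * G (s - 1) :=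
      gollnitzGF_of_primary x q (by omega)
    simp only [Nat.reduceSubDiff] at h₆ h₅ ⊢
    linear_combination h₆ + h₅ - x * q ^ (s + 11) * h₀ + x ^ 2 * q ^ (s + 12) * h₁

/-- `(1 - x q⁴ S)(1 - x q⁵ S) G_{6k+7} = (1 + x² q⁶ S)(1 + x² q⁷ S) G_{6k+3}`, at the
index `k + 2`. -/
theorem gollnitzGF_seven_three (k : ℕ) :
    G (6 * k + 19) - x * q ^ (6 * k + 16) * (1 + q) * G (6 * k + 13)
        + x ^ 2 * q ^ (12 * k + 27) * G (6 * k + 7) =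
      G (6 * k + 15) + x ^ 2 * q ^ (6 * k + 18) * (1 + q) * G (6 * k + 9)
        + x ^ 4 * q ^ (12 * k + 31) * G (6 * k + 3) := by
  have seven (j : ℕ) : G (6 * j + 7) = G (6 * j + 6) + x ^ 2 * q ^ (6 * j + 7) * G (6 * j) :=
    gollnitzGF_add_seven x q (by omega)
  have four (j : ℕ) : G (6 * j + 4) = G (6 * j + 3) + x * q ^ (6 * j + 4) * G (6 * j - 2) :=
    gollnitzGF_of_primary x q (by omega)
  have exchange (j : ℕ) : G (6 * j + 6) - x * q ^ (6 * j + 5) * G (6 * j) =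
      G (6 * j + 4) + x ^ 2 * q ^ (6 * j + 6) * G (6 * j - 2) :=
    gollnitzGF_exchange x q (by omega) (by omega)
  have seven₁ := seven (k + 1)
  have seven₂ := seven (k + 2)
  have four₁ := four (k + 1)
  have four₂ := four (k + 2)
  have exchange₁ := exchange (k + 1)
  have exchange₂ := exchange (k + 2)
  simp only [mul_add, add_assoc, Nat.reduceMul, Nat.reduceAdd, Nat.reduceSubDiff]
    at seven₁ seven₂ four₁ four₂ exchange₁ exchange₂
  linear_combination
    seven₂ - x * q ^ (6 * k + 16) * (1 + q) * seven₁ + x ^ 2 * q ^ (12 * k + 27) * seven k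
    + exchange₂ + (x ^ 2 * q ^ (6 * k + 19) - x * q ^ (6 * k + 16)) * exchange₁
    - x ^ 3 * q ^ (12 * k + 29) * exchange k
    + four₂ + x ^ 2 * q ^ (6 * k + 18) * (1 + q) * four₁ + x ^ 4 * q ^ (12 * k + 31) * four k

/-- `(1 - x q⁴ S)(1 - x q⁵ S)(1 - x q⁸ S) G_{6k+9} =
(1 + x² q⁶ S)(1 + x² q⁷ S)(1 + x² q⁹ S) G_{6k+3}`, at the index `k + 3`. -/
theorem gollnitzGF_recurrence (k : ℕ) :
    G (6 * k + 27) - x * q ^ (6 * k + 22) * (1 + q + q ^ 4) * G (6 * k + 21)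
        + x ^ 2 * q ^ (12 * k + 39) * (1 + q ^ 3 + q ^ 4) * G (6 * k + 15)
        - x ^ 3 * q ^ (18 * k + 53) * G (6 * k + 9) =
      G (6 * k + 21) + x ^ 2 * q ^ (6 * k + 24) * (1 + q + q ^ 3) * G (6 * k + 15)
        + x ^ 4 * q ^ (12 * k + 43) * (1 + q ^ 2 + q ^ 3) * G (6 * k + 9)
        + x ^ 6 * q ^ (18 * k + 58) * G (6 * k + 3) := by
  have exchange (j : ℕ) : G (6 * j + 15) - x * q ^ (6 * j + 14) * G (6 * j + 9) =
      G (6 * j + 13) + x ^ 2 * q ^ (6 * j + 15) * G (6 * j + 7) :=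
    gollnitzGF_exchange x q (by omega) (by omega)
  have exchange₁ := exchange (k + 1)
  have exchange₂ := exchange (k + 2)
  have seven_three₁ := gollnitzGF_seven_three x q (k + 1)
  simp only [mul_add, add_assoc, Nat.reduceMul, Nat.reduceAdd]
    at exchange₁ exchange₂ seven_three₁
  linear_combination
    exchange₂ - x * q ^ (6 * k + 22) * (1 + q) * exchange₁
    + x ^ 2 * q ^ (12 * k + 39) * exchange k
    + seven_three₁ + x ^ 2 * q ^ (6 * k + 27) * gollnitzGF_seven_three x q k

local notation "P" => primaryFactor x q
local notation "Gshift" => gollnitzGF (x * q ^ 6) q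

theorem primaryFactor_mul_gollnitzGF_base :
    P * Gshift 5 = G 15 - x * q ^ 14 * G 9 ∧
    P * Gshift 6 = G 15 - x * q ^ 14 * G 9 + x ^ 2 * q ^ 18 * (G 9 - x * q ^ 8 * G 3) ∧
    P * Gshift 8 = G 15 + x ^ 2 * q ^ 18 * (1 + q) * G 9 + x ^ 4 * q ^ 31 * G 3 ∧
    P * Gshift 10 = G 21 - x * q ^ 20 * G 15 - x * q ^ 17 * (G 15 - x * q ^ 14 * G 9) := by
  refine ⟨?_, ?_, ?_, ?_⟩ <;>
  · simp +decide only [primaryFactor, gollnitzGF_of_primary, gollnitzGF_of_secondary,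
      gollnitzGF_zero, gollnitzGF_one, gollnitzGF_three, not_false_eq_true, Nat.reduceLeDiff,
      Nat.reduceSub]
    ring

theorem primaryFactor_mul_gollnitzGF (k : ℕ) :
    P * Gshift (6 * k + 5) = G (6 * k + 15) - x * q ^ (6 * k + 14) * G (6 * k + 9) ∧
    P * Gshift (6 * k + 6) = G (6 * k + 15) - x * q ^ (6 * k + 14) * G (6 * k + 9)
      + x ^ 2 * q ^ (6 * k + 18) * (G (6 * k + 9) - x * q ^ (6 * k + 8) * G (6 * k + 3)) ∧
    P * Gshift (6 * k + 8) = G (6 * k + 15) + x ^ 2 * q ^ (6 * k + 18) * (1 + q) * G (6 * k + 9)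
      + x ^ 4 * q ^ (12 * k + 31) * G (6 * k + 3) ∧
    P * Gshift (6 * k + 10) = G (6 * k + 21) - x * q ^ (6 * k + 20) * G (6 * k + 15)
      - x * q ^ (6 * k + 17) * (G (6 * k + 15) - x * q ^ (6 * k + 14) * G (6 * k + 9)) := by
  induction k with
  | zero => simpa only [mul_zero, zero_add] using primaryFactor_mul_gollnitzGF_base x q
  | succ k ih =>
    obtain ⟨h₅, h₆, h₈, h₁₀⟩ := ih
    have primary (r : ℕ) (hr : ¬ IsSecondary r) : Gshift (6 * k + r + 6) =
        Gshift (6 * k + r + 5) + x * q ^ 6 * q ^ (6 * k + r + 6) * Gshift (6 * k + r) :=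
      gollnitzGF_add_six _ q (by omega)
    have secondary (r : ℕ) (hr : IsSecondary (r + 1)) : Gshift (6 * k + r + 7) =
        Gshift (6 * k + r + 6) + (x * q ^ 6) ^ 2 * q ^ (6 * k + r + 7) * Gshift (6 * k + r) :=
      gollnitzGF_add_seven _ q (by omega)
    have h₁₁ : P * Gshift (6 * k + 11) =
        G (6 * k + 21) - x * q ^ (6 * k + 20) * G (6 * k + 15) := by
      linear_combination P * primary 5 (by decide) + h₁₀ + x * q ^ (6 * k + 17) * h₅
    have h₁₂ : P * Gshift (6 * k + 12) = G (6 * k + 21) - x * q ^ (6 * k + 20) * G (6 * k + 15)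
        + x ^ 2 * q ^ (6 * k + 24) *
          (G (6 * k + 15) - x * q ^ (6 * k + 14) * G (6 * k + 9)) := by
      linear_combination P * secondary 5 (by decide) + h₁₁ + x ^ 2 * q ^ (6 * k + 24) * h₅
    have h₁₄ : P * Gshift (6 * k + 14) = G (6 * k + 21)
        + x ^ 2 * q ^ (6 * k + 24) * (1 + q) * G (6 * k + 15)
        + x ^ 4 * q ^ (12 * k + 43) * G (6 * k + 9) := by
      linear_combination P * (primary 8 (by decide) + secondary 6 (by decide)) + h₁₂
        + x ^ 2 * q ^ (6 * k + 25) * h₆ + x * q ^ (6 * k + 20) * h₈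
    have h₁₆ : P * Gshift (6 * k + 16) = G (6 * k + 27) - x * q ^ (6 * k + 26) * G (6 * k + 21)
        - x * q ^ (6 * k + 23) *
          (G (6 * k + 21) - x * q ^ (6 * k + 20) * G (6 * k + 15)) := by
      linear_combination P * (primary 10 (by decide) + secondary 8 (by decide)) + h₁₄
        + x ^ 2 * q ^ (6 * k + 27) * h₈ + x * q ^ (6 * k + 22) * h₁₀
        - gollnitzGF_recurrence x q k
    simp only [mul_add, add_assoc, Nat.reduceMul, Nat.reduceAdd] at h₁₁ h₁₂ h₁₄ h₁₆ ⊢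
    exact ⟨h₁₁, h₁₂, h₁₄, h₁₆⟩

theorem pow_dvd_primaryFactor_mul_gollnitzGF_sub (k : ℕ) :
    q ^ (6 * k) ∣ P * Gshift (6 * k + 5) - G (6 * k + 5) := by
  have hdvd : ∀ i, 6 * k + 5 < i → q ^ (6 * k) ∣ gollnitzWeight x q i :=
    fun i hi => (pow_dvd_pow q (by omega)).mul_left _
  have hstable : q ^ (6 * k) ∣ G (6 * k + 15) - G (6 * k + 5) :=
    dvd_gapGF_sub_gapGF (by omega) hdvd
  rw [(primaryFactor_mul_gollnitzGF x q k).1, sub_right_comm]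
  exact dvd_sub hstable (((pow_dvd_pow q (by omega)).mul_left x).mul_right _)

theorem pow_dvd_prod_primaryFactor_mul_gollnitzGF_sub (k j : ℕ) :
    q ^ (6 * k) ∣
      (∏ i ∈ range j, primaryFactor (x * q ^ (6 * i)) q) *
        gollnitzGF (x * q ^ (6 * j)) q (6 * k + 5) - G (6 * k + 5) := by
  induction j with
  | zero => simp
  | succ j ih =>
    have hstep := pow_dvd_primaryFactor_mul_gollnitzGF_sub (x * q ^ (6 * j)) q k
    have hshift : x * q ^ (6 * (j + 1)) = x * q ^ (6 * j) * q ^ 6 := by ring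
    rw [prod_range_succ, hshift]
    convert dvd_add (hstep.mul_left (∏ i ∈ range j, primaryFactor (x * q ^ (6 * i)) q)) ih using 1
    ring

theorem pow_dvd_prod_primaryFactor_sub_gollnitzGF (k : ℕ) :
    q ^ (6 * k) ∣ ∏ i ∈ range k, primaryFactor (x * q ^ (6 * i)) q - G (6 * k + 5) := by
  have hweight (m : ℕ) : q ^ (6 * k) ∣ gollnitzWeight (x * q ^ (6 * k)) q m :=
    ((dvd_mul_left _ x).trans (dvd_pow_self _ (by split_ifs <;> decide))).mul_right _
  have hone : q ^ (6 * k) ∣ gollnitzGF (x * q ^ (6 * k)) q (6 * k + 5) - 1 :=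
    dvd_gapGF_sub_one hweight _
  convert dvd_sub (pow_dvd_prod_primaryFactor_mul_gollnitzGF_sub x q k k)
    (hone.mul_left (∏ i ∈ range k, primaryFactor (x * q ^ (6 * i)) q)) using 1
  ring

end CommRing

end GollnitzGF

/-- Göllnitz's (big) partition theorem: the number of partitions of `n` into distinct
parts congruent to 2, 4 or 5 mod 6 equals the number of partitions of `n` into parts
different from 1 and 3 such that consecutive parts differ by at least 6, with the
difference strictly greater than 6 whenever the larger part is ≡ 0, 1 or 3 (mod 6).
Partitions are represented as decreasing lists of positive integers. -/
theorem gollnitz_partition_theorem (n : ℕ) (hn : 0 < n) :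
    {l : List ℕ | l.Chain' (· > ·) ∧ (∀ x ∈ l, x % 6 = 2 ∨ x % 6 = 4 ∨ x % 6 = 5) ∧
      l.sum = n}.ncard =
    {l : List ℕ | (∀ x ∈ l, 0 < x ∧ x ≠ 1 ∧ x ≠ 3) ∧
      l.Chain' (fun x y => y + 6 ≤ x ∧ (x % 6 = 0 ∨ x % 6 = 1 ∨ x % 6 = 3 → y + 6 < x)) ∧
      l.sum = n}.ncard := by
  have hdistinct := ncard_gapChain_eq_coeff (p := fun m => m % 6 = 2 ∨ m % 6 = 4 ∨ m % 6 = 5)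
    (e := fun _ => 0) (by decide) (show n ≤ 6 * (n + 1) by omega)
  have hgap := ncard_gapChain_eq_coeff (p := IsGollnitzPart) (e := gollnitzGap)
    (by decide) (show n ≤ 6 * (n + 1) + 5 by omega)
  have hcoeff := PowerSeries.X_pow_dvd_iff.1
    (pow_dvd_prod_primaryFactor_sub_gollnitzGF 1 (PowerSeries.X : PowerSeries ℤ) (n + 1)) n
    (by omega)
  rw [← gapGF_primary_eq_prod] at hcoeff
  have hweight : gollnitzWeight 1 (PowerSeries.X : PowerSeries ℤ) = (PowerSeries.X ^ ·) := by
    funext m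
    simp [gollnitzWeight]
  simp only [gollnitzGF, hweight, one_mul, map_sub, sub_eq_zero,
    ← hdistinct, ← hgap, Nat.cast_inj, add_gollnitzGap_lt_iff, add_zero] at hcoeff
  exact hcoeff.trans (congrArg Set.ncard (Set.ext fun _ => and_left_comm))
end

section
/- For all integers i, j, k ≥ 0, the identity \sum q^{T_s + T_δ + T_ε + T_{φ-1}} (1 - q^{α} + q^{α+φ}) / ((q)_α (q)_β (q)_γ (q)_δ (q)_ε (q)_φ) = q^{T_i + T_j + T_k} / ((q)_i (q)_j (q)_k) holds as an identity of formal power series in q, where the sum is over all non-negative integers α, β, γ, δ, ε, φ with i = α + δ + ε, j = β + δ + φ, k = γ + ε + φ, and s = α + β + γ + δ + ε + φ. (This is the key identity for Göllnitz's theorem: multiplying by A^i B^j C^k and summing yields (−Aq)_∞ (−Bq)_∞ (−Cq)_∞.) -/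
open Finset

/-- `(q)_n = (q;q)_n = ∏_{t=0}^{n-1} (1 - q^{t+1})` as a formal power series over `ℚ`. -/
noncomputable def qPochPS (n : ℕ) : PowerSeries ℚ :=
  ∏ t ∈ Finset.range n, (1 - (PowerSeries.X : PowerSeries ℚ) ^ (t + 1))

/-- `T n = n(n+1)/2`, the n-th triangular number.  (With truncated subtraction,
`tri (φ - 1)` for `φ = 0` is `tri 0 = 0`, matching the convention `T_{-1} = 0`.) -/
def tri (n : ℕ) : ℕ := n * (n + 1) / 2

/-!
Let `L` be the linear functional `zˢ ↦ q^{T_s}` on power series in `z`, which satisfies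
`L[z f(z)] = q L[f(qz)]`. Put `H(a) = (-abzq, -aczq, -bczq; q)_∞ / (az, bz, cz; q)_∞` and
`F(z) = (1 + bcz) H(a)`. Because `1 - q^α + q^{α+φ} = 1 - q^α (1 - q^φ)`, the left-hand sides of the
key identity are the coefficients in `a`, `b`, `c` of
`S(a) = L[F - (1 - az) bcz H(a)] = L[(1 + abcz²) H(a)]`. The product `H` satisfies
`(1 + abcz²) H(a) - (1 + aq) (1 + abcqz²) H(aq) = a (z F(z) - q F(qz))`, whose right-hand side is
killed by `L`. Hence `S(a) = (1 + aq) S(aq)`, and by symmetry the same holds in `b` and in `c`, so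
that `S = (-aq, -bq, -cq; q)_∞`.
-/

open PowerSeries

lemma tri_succ (n : ℕ) : tri (n + 1) = tri n + (n + 1) := by
  rw [tri, tri, show (n + 1) * (n + 1 + 1) = n * (n + 1) + (n + 1) * 2 by ring,
    Nat.add_mul_div_right _ _ two_pos]

lemma rescale_C {R : Type*} [CommSemiring R] (a b : R) : rescale a (C b) = C b := by
  ext (_ | n) <;> simp [coeff_rescale, coeff_C]

section QExponentials

variable {R S : Type*} [CommRing R] [CommRing S] {q : R}

/-- The `q`-Pochhammer symbol `(q; q)_n`. -/
def qPoch (q : R) (n : ℕ) : R := ∏ t ∈ range n, (1 - q ^ (t + 1))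

lemma qPoch_succ (q : R) (n : ℕ) : qPoch q (n + 1) = qPoch q n * (1 - q ^ (n + 1)) :=
  prod_range_succ _ n

lemma map_qPoch (g : R →+* S) (q : R) (n : ℕ) : g (qPoch q n) = qPoch (g q) n := by
  simp [qPoch]

lemma isUnit_qPoch (hq : ∀ n, IsUnit (1 - q ^ (n + 1))) (n : ℕ) : IsUnit (qPoch q n) :=
  IsUnit.prod_iff.2 fun t _ ↦ hq t

lemma isUnit_one_sub_map_pow (g : R →+* S) (hq : ∀ n, IsUnit (1 - q ^ (n + 1))) (n : ℕ) :
    IsUnit (1 - g q ^ (n + 1)) := by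
  simpa using (hq n).map g

lemma map_inverse_of_isUnit (g : R →+* S) {a : R} (ha : IsUnit a) :
    g (Ring.inverse a) = Ring.inverse (g a) := by
  obtain ⟨u, rfl⟩ := ha
  simpa using (Ring.inverse_unit (Units.map (g : R →* S) u)).symm

lemma one_sub_pow_mul_inverse_qPoch_succ (hq : ∀ n, IsUnit (1 - q ^ (n + 1))) (n : ℕ) :
    (1 - q ^ (n + 1)) * Ring.inverse (qPoch q (n + 1)) = Ring.inverse (qPoch q n) := by
  rw [qPoch_succ, Ring.mul_inverse_rev, Ring.mul_inverse_cancel_left _ _ (hq n)]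

lemma eq_pow_tri_mul_inverse_qPoch_mul (hq : ∀ n, IsUnit (1 - q ^ (n + 1))) {g : ℕ → R} {n : ℕ}
    (hg : ∀ l < n, (1 - q ^ (l + 1)) * g (l + 1) = q ^ (l + 1) * g l) :
    g n = q ^ tri n * Ring.inverse (qPoch q n) * g 0 := by
  induction n with
  | zero => simp [tri, qPoch]
  | succ n ih =>
    refine (hq n).mul_left_cancel ?_
    rw [hg n n.lt_succ_self, ih fun l hl ↦ hg l (hl.trans n.lt_succ_self),
      ← one_sub_pow_mul_inverse_qPoch_succ hq n, tri_succ]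
    ring

/-- The `q`-exponential series `∑ zⁿ / (q)_n = 1 / (z; q)_∞` in the variable `z = X`. -/
noncomputable def qExp (q : R) : R⟦X⟧ :=
  .mk fun n ↦ Ring.inverse (qPoch q n)

/-- The `q`-exponential series `∑ q^{T_n} zⁿ / (q)_n = (-zq; q)_∞` in the variable `z = X`. -/
noncomputable def qExpTri (q : R) : R⟦X⟧ :=
  .mk fun n ↦ q ^ tri n * Ring.inverse (qPoch q n)

lemma coeff_qExp (q : R) (n : ℕ) : coeff n (qExp q) = Ring.inverse (qPoch q n) :=
  coeff_mk _ _

lemma coeff_qExpTri (q : R) (n : ℕ) :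
    coeff n (qExpTri q) = q ^ tri n * Ring.inverse (qPoch q n) :=
  coeff_mk _ _

lemma map_qExp (g : R →+* S) (hq : ∀ n, IsUnit (1 - q ^ (n + 1))) :
    (qExp q).map g = qExp (g q) := by
  ext n
  simp [coeff_qExp, map_inverse_of_isUnit g (isUnit_qPoch hq n), map_qPoch]

lemma map_qExpTri (g : R →+* S) (hq : ∀ n, IsUnit (1 - q ^ (n + 1))) :
    (qExpTri q).map g = qExpTri (g q) := by
  ext n
  simp [coeff_qExpTri, map_inverse_of_isUnit g (isUnit_qPoch hq n), map_qPoch]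

lemma rescale_qExp (hq : ∀ n, IsUnit (1 - q ^ (n + 1))) :
    rescale q (qExp q) = (1 - X) * qExp q := by
  ext (_ | n)
  · simp [sub_mul]
  · simp only [coeff_qExp, coeff_rescale, sub_mul, one_mul, map_sub, coeff_succ_X_mul]
    linear_combination -one_sub_pow_mul_inverse_qPoch_succ hq n

lemma qExpTri_eq_mul_rescale (hq : ∀ n, IsUnit (1 - q ^ (n + 1))) :
    qExpTri q = (1 + C q * X) * rescale q (qExpTri q) := by
  ext (_ | n)
  · simp [add_mul, mul_assoc, coeff_rescale, -coeff_zero_eq_constantCoeff, coeff_zero_X_mul]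
  · simp only [coeff_qExpTri, coeff_rescale, add_mul, one_mul, map_add, mul_assoc,
      coeff_C_mul, coeff_succ_X_mul, tri_succ]
    linear_combination q ^ (tri n + (n + 1)) * one_sub_pow_mul_inverse_qPoch_succ hq n

lemma rescale_mul_qExp (hq : ∀ n, IsUnit (1 - q ^ (n + 1))) (a : R) :
    rescale (a * q) (qExp q) = (1 - C a * X) * rescale a (qExp q) := by
  rw [mul_comm, ← rescale_rescale, rescale_qExp hq, map_mul, map_sub, map_one, rescale_X]

lemma rescale_qExpTri (hq : ∀ n, IsUnit (1 - q ^ (n + 1))) (a : R) :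
    rescale a (qExpTri q) = (1 + C (a * q) * X) * rescale (a * q) (qExpTri q) := by
  conv_lhs => rw [qExpTri_eq_mul_rescale hq]
  rw [map_mul, rescale_rescale, map_add, map_one, map_mul, rescale_C, rescale_X, map_mul]
  ring_nf

lemma coeff_X_mul_qExpTri (hq : ∀ n, IsUnit (1 - q ^ (n + 1))) (n : ℕ) :
    coeff n (X * qExpTri q) = q ^ tri (n - 1) * (1 - q ^ n) * Ring.inverse (qPoch q n) := by
  obtain _ | n := n
  · simp
  · rw [coeff_succ_X_mul, coeff_qExpTri, ← one_sub_pow_mul_inverse_qPoch_succ hq,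
      add_tsub_cancel_right, mul_assoc]

lemma coeff_one_add_X_mul_qExpTri (hq : ∀ n, IsUnit (1 - q ^ (n + 1))) (n : ℕ) :
    coeff n ((1 + X) * qExpTri q) = q ^ tri (n - 1) * Ring.inverse (qPoch q n) := by
  have htri : q ^ tri n = q ^ tri (n - 1) * q ^ n := by
    obtain _ | n := n
    · simp [tri]
    · rw [tri_succ, pow_add, add_tsub_cancel_right]
  rw [add_mul, one_mul, map_add, coeff_X_mul_qExpTri hq, coeff_qExpTri, htri]
  ring

end QExponentials

section TriSum

variable {R S : Type*} [CommRing R] [CommRing S]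

/-- The linear functional `zˢ ↦ q^{T_s}` on power series in `z`, truncated to `s < N` because over
a general ring the full sum has no meaning. -/
noncomputable def triSum (q : R) (N : ℕ) : R⟦X⟧ →ₗ[R] R :=
  ∑ s ∈ range N, q ^ tri s • coeff s

lemma triSum_apply (q : R) (N : ℕ) (f : R⟦X⟧) :
    triSum q N f = ∑ s ∈ range N, q ^ tri s * coeff s f := by
  simp [triSum]

lemma map_triSum (g : R →+* S) (q : R) (N : ℕ) (f : R⟦X⟧) :
    g (triSum q N f) = triSum (g q) N (f.map g) := by
  simp [triSum_apply]

lemma triSum_succ_X_mul (q : R) (N : ℕ) (f : R⟦X⟧) :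
    triSum q (N + 1) (X * f) = q * triSum q N (rescale q f) := by
  rw [triSum_apply, triSum_apply, sum_range_succ', mul_sum]
  simp only [coeff_zero_X_mul, mul_zero, add_zero, coeff_succ_X_mul, coeff_rescale, tri_succ]
  exact sum_congr rfl fun s _ ↦ by ring

lemma triSum_succ_X_mul_sub (q : R) (N : ℕ) (f : R⟦X⟧) :
    triSum q (N + 1) (X * f - C q * rescale q f) = -q ^ tri (N + 1) * coeff N f := by
  rw [map_sub, triSum_succ_X_mul, ← smul_eq_C_mul, map_smul, triSum_apply _ (N + 1),
    sum_range_succ, ← triSum_apply, coeff_rescale, tri_succ, smul_eq_mul]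
  ring

end TriSum

section FunctionalEquation

variable {R S : Type*} [CommRing R] [CommRing S] {q : R}

/-- The product `∏ 1 / (az, bz, cz; q)_∞ · (-abzq, -aczq, -bczq; q)_∞`, in which `a`, `b`, `c` mark
`i`, `j`, `k` and `z = X` marks `s`. -/
noncomputable def colourProd (q a b c : R) : R⟦X⟧ :=
  rescale a (qExp q) * rescale b (qExp q) * rescale c (qExp q) *
    rescale (a * b) (qExpTri q) * rescale (a * c) (qExpTri q) * rescale (b * c) (qExpTri q)

lemma colourProd_swap₁₂ (q a b c : R) : colourProd q b a c = colourProd q a b c := by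
  rw [colourProd, colourProd, mul_comm b a]
  ring

lemma colourProd_swap₁₃ (q a b c : R) : colourProd q c b a = colourProd q a b c := by
  rw [colourProd, colourProd, mul_comm c b, mul_comm c a, mul_comm b a]
  ring

lemma map_colourProd (g : R →+* S) (hq : ∀ n, IsUnit (1 - q ^ (n + 1))) (a b c : R) :
    (colourProd q a b c).map g = colourProd (g q) (g a) (g b) (g c) := by
  simp only [colourProd, map_mul, ← rescale_map, map_qExp g hq, map_qExpTri g hq]

theorem colourProd_functional_equation (hq : ∀ n, IsUnit (1 - q ^ (n + 1))) (a b c : R) :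
    (1 + C (a * b * c) * X ^ 2) * colourProd q a b c -
        C (1 + a * q) * ((1 + C (a * q * b * c) * X ^ 2) * colourProd q (a * q) b c) =
      C a * (X * ((1 + C (b * c) * X) * colourProd q a b c) -
        C q * rescale q ((1 + C (b * c) * X) * colourProd q a b c)) := by
  have ha := rescale_mul_qExp hq a
  have hb := rescale_mul_qExp hq b
  have hc := rescale_mul_qExp hq c
  have hab := rescale_qExpTri hq (a * b)
  have hac := rescale_qExpTri hq (a * c)
  have hbc := rescale_qExpTri hq (b * c)
  simp only [map_mul] at hab hac hbc
  have hdilated : rescale q ((1 + C (b * c) * X) * colourProd q a b c) =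
      (1 - C a * X) * (1 - C b * X) * (1 - C c * X) *
        (rescale a (qExp q) * rescale b (qExp q) * rescale c (qExp q) *
          rescale (a * b * q) (qExpTri q) * rescale (a * c * q) (qExpTri q) *
          rescale (b * c) (qExpTri q)) := by
    simp only [colourProd, map_mul, map_add, map_one, rescale_X, rescale_C, rescale_rescale,
      ha, hb, hc]
    rw [hbc]
    ring
  rw [hdilated]
  simp only [colourProd, hab, hac, ha, mul_right_comm a q, map_mul, map_add, map_one]
  ring

/-- The truncated sum `∑_{s < N} q^{T_s} [zˢ] (1 + abcz²) · colourProd q a b c`, which is the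
generating function in `a`, `b`, `c` of the left-hand side of the key identity. -/
noncomputable def gollnitzSum (q : R) (N : ℕ) (a b c : R) : R :=
  triSum q N ((1 + C (a * b * c) * X ^ 2) * colourProd q a b c)

lemma gollnitzSum_swap₁₂ (q : R) (N : ℕ) (a b c : R) :
    gollnitzSum q N b a c = gollnitzSum q N a b c := by
  rw [gollnitzSum, gollnitzSum, colourProd_swap₁₂, mul_comm b a]

lemma gollnitzSum_swap₁₃ (q : R) (N : ℕ) (a b c : R) :
    gollnitzSum q N c b a = gollnitzSum q N a b c := by
  rw [gollnitzSum, gollnitzSum, colourProd_swap₁₃, mul_comm c b, mul_comm _ a, mul_assoc a b]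

lemma map_gollnitzSum (g : R →+* S) (hq : ∀ n, IsUnit (1 - q ^ (n + 1))) (N : ℕ) (a b c : R) :
    g (gollnitzSum q N a b c) = gollnitzSum (g q) N (g a) (g b) (g c) := by
  simp only [gollnitzSum, map_triSum, map_mul, map_add, map_one, map_pow, map_C, map_X,
    map_colourProd g hq]

lemma gollnitzSum_zero (q : R) (N : ℕ) : gollnitzSum q (N + 1) 0 0 0 = 1 := by
  simp [gollnitzSum, colourProd, triSum_apply, qExp, qExpTri, tri, qPoch]

lemma gollnitzSum_sub_dilated (hq : ∀ n, IsUnit (1 - q ^ (n + 1))) (N : ℕ) (a b c : R) :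
    gollnitzSum q (N + 1) a b c - (1 + a * q) * gollnitzSum q (N + 1) (a * q) b c =
      -a * q ^ tri (N + 1) * coeff N ((1 + C (b * c) * X) * colourProd q a b c) := by
  rw [gollnitzSum, gollnitzSum, ← smul_eq_mul (1 + a * q), ← map_smul, ← map_sub, smul_eq_C_mul,
    colourProd_functional_equation hq, ← smul_eq_C_mul, map_smul, triSum_succ_X_mul_sub,
    smul_eq_mul]
  ring

end FunctionalEquation

section WeightedProducts

variable {ι σ R : Type*} [Fintype ι] [CommRing R]

/-- The product `∏ₜ fₜ(a^{dₜ} z)` of power series in `z = X`, where `a` stands for the variables of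
`MvPowerSeries σ R`. -/
noncomputable def monomialProd (d : ι → σ →₀ ℕ) (f : ι → R⟦X⟧) : (MvPowerSeries σ R)⟦X⟧ :=
  ∏ t, rescale (MvPowerSeries.monomial (d t) 1) ((f t).map MvPowerSeries.C)

lemma sum_le_degree_sum_smul {d : ι → σ →₀ ℕ} (hd : ∀ t, d t ≠ 0) (x : ι → ℕ) :
    ∑ t, x t ≤ (∑ t, x t • d t).degree := by
  rw [map_sum]
  refine sum_le_sum fun t _ ↦ ?_
  rw [map_nsmul, smul_eq_mul]
  exact Nat.le_mul_of_pos_right _ (Nat.pos_of_ne_zero ((Finsupp.degree_eq_zero_iff _).not.2 (hd t)))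

lemma coeff_coeff_monomialProd [DecidableEq ι] [DecidableEq σ] (d : ι → σ →₀ ℕ) (f : ι → R⟦X⟧)
    (m : σ →₀ ℕ) (s : ℕ) :
    MvPowerSeries.coeff m (coeff s (monomialProd d f)) =
      ∑ x ∈ piAntidiag univ s with ∑ t, x t • d t = m, ∏ t, coeff (x t) (f t) := by
  have hterm (l : ι →₀ ℕ) :
      (∏ t, coeff (l t) (rescale (MvPowerSeries.monomial (d t) 1) ((f t).map MvPowerSeries.C))) =
        MvPowerSeries.monomial (∑ t, l t • d t) (∏ t, coeff (l t) (f t)) := by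
    rw [← MvPowerSeries.prod_monomial]
    refine prod_congr rfl fun t _ ↦ ?_
    rw [coeff_rescale, coeff_map, MvPowerSeries.monomial_pow, one_pow, mul_comm,
      ← MvPowerSeries.monomial_zero_eq_C_apply, MvPowerSeries.monomial_mul_monomial, zero_add,
      mul_one]
  simp only [monomialProd, coeff_prod, hterm, map_sum, MvPowerSeries.coeff_monomial, sum_filter]
  exact sum_equiv Finsupp.equivFunOnFinite (by simp) fun l _ ↦ by simp [eq_comm]

lemma coeff_coeff_monomialProd_eq_zero {d : ι → σ →₀ ℕ} (hd : ∀ t, d t ≠ 0) (f : ι → R⟦X⟧)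
    {m : σ →₀ ℕ} {s : ℕ} (hs : m.degree < s) :
    MvPowerSeries.coeff m (coeff s (monomialProd d f)) = 0 := by
  classical
  rw [coeff_coeff_monomialProd]
  refine sum_eq_zero fun x hx ↦ ?_
  obtain ⟨hxs, hxm⟩ := mem_filter.1 hx
  have := sum_le_degree_sum_smul hd x
  rw [hxm, (mem_piAntidiag.1 hxs).1] at this
  omega

variable [DecidableEq ι] [DecidableEq σ]

/-- The exponents `x` for which the monomials of weight `d` multiply to the monomial `m`. -/
noncomputable def weightSolutions (d : ι → σ →₀ ℕ) (m : σ →₀ ℕ) : Finset (ι → ℕ) :=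
  {x ∈ Fintype.piFinset fun _ ↦ range (m.degree + 1) | ∑ t, x t • d t = m}

lemma mem_weightSolutions {d : ι → σ →₀ ℕ} (hd : ∀ t, d t ≠ 0) {m : σ →₀ ℕ} {x : ι → ℕ} :
    x ∈ weightSolutions d m ↔ ∑ t, x t • d t = m := by
  simp only [weightSolutions, mem_filter, Fintype.mem_piFinset, mem_range, and_iff_right_iff_imp]
  rintro rfl t
  exact Nat.lt_succ_of_le <|
    (single_le_sum_of_canonicallyOrdered (mem_univ t)).trans (sum_le_degree_sum_smul hd x)

lemma coeff_triSum_monomialProd {d : ι → σ →₀ ℕ} (hd : ∀ t, d t ≠ 0) (q : R) (f : ι → R⟦X⟧)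
    {m : σ →₀ ℕ} {N : ℕ} (hN : m.degree < N) :
    MvPowerSeries.coeff m (triSum (MvPowerSeries.C q) N (monomialProd d f)) =
      ∑ x ∈ weightSolutions d m, q ^ tri (∑ t, x t) * ∏ t, coeff (x t) (f t) := by
  have hmaps : ∀ x ∈ weightSolutions d m, ∑ t, x t ∈ range N := fun x hx ↦ by
    rw [mem_weightSolutions hd] at hx
    exact mem_range.2 ((hx ▸ sum_le_degree_sum_smul hd x).trans_lt hN)
  rw [← sum_fiberwise_of_maps_to hmaps, triSum_apply, map_sum]
  refine sum_congr rfl fun s _ ↦ ?_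
  rw [← map_pow, MvPowerSeries.coeff_C_mul, coeff_coeff_monomialProd, mul_sum]
  refine sum_congr ?_ fun x hx ↦ ?_
  · ext x
    simp [mem_weightSolutions hd, and_comm]
  · rw [(mem_filter.1 hx).2]

end WeightedProducts

section Recurrence

variable {σ R : Type*} [CommRing R] {q : R}

lemma mvRescale_X (w : σ → R) (a : σ) :
    MvPowerSeries.rescale w (MvPowerSeries.X a) = MvPowerSeries.C (w a) * MvPowerSeries.X a := by
  classical
  ext m
  rw [MvPowerSeries.coeff_rescale, MvPowerSeries.coeff_C_mul, MvPowerSeries.coeff_X]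
  split_ifs with h <;> simp [h]

lemma mvRescale_C (w : σ → R) (r : R) :
    MvPowerSeries.rescale w (MvPowerSeries.C r) = MvPowerSeries.C r := by
  classical
  ext m
  rw [MvPowerSeries.coeff_rescale, MvPowerSeries.coeff_C]
  split_ifs with h <;> simp [h]

lemma coeff_mvRescale_update_one [DecidableEq σ] (a : σ) (m : σ →₀ ℕ) (p : MvPowerSeries σ R) :
    MvPowerSeries.coeff m (MvPowerSeries.rescale (Function.update 1 a q) p) =
      q ^ m a * MvPowerSeries.coeff m p := by
  rw [MvPowerSeries.coeff_rescale]
  congr 1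
  rw [Finsupp.prod, prod_eq_single a]
  · simp
  · intro b _ hb
    simp [hb]
  · simp +contextual

/-- The sum `gollnitzSum` at three of the variables of `MvPowerSeries σ R`. The truncation does not
affect its coefficients in degrees less than `N`. -/
noncomputable def gollnitzSeries (q : R) (N : ℕ) (a b c : σ) : MvPowerSeries σ R :=
  gollnitzSum (MvPowerSeries.C q) N (MvPowerSeries.X a) (MvPowerSeries.X b) (MvPowerSeries.X c)

lemma rescale_gollnitzSeries [DecidableEq σ] (hq : ∀ n, IsUnit (1 - q ^ (n + 1))) (N : ℕ)
    {a b c : σ} (hb : b ≠ a) (hc : c ≠ a) :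
    MvPowerSeries.rescale (Function.update 1 a q) (gollnitzSeries q N a b c) =
      gollnitzSum (MvPowerSeries.C q) N (MvPowerSeries.X a * MvPowerSeries.C q)
        (MvPowerSeries.X b) (MvPowerSeries.X c) := by
  rw [gollnitzSeries, map_gollnitzSum _ (isUnit_one_sub_map_pow _ hq)]
  simp [mvRescale_X, mvRescale_C, hb, hc, mul_comm]

/-- The exponent vectors of the six colours `a`, `b`, `c`, `ab`, `ac`, `bc`, whose multiplicities
are `α`, `β`, `γ`, `δ`, `ε`, `φ` in the key identity. -/
noncomputable def colourWeight (a b c : σ) : Fin 6 → σ →₀ ℕ :=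
  ![.single a 1, .single b 1, .single c 1, .single a 1 + .single b 1, .single a 1 + .single c 1,
    .single b 1 + .single c 1]

lemma colourWeight_ne_zero (a b c : σ) (t : Fin 6) : colourWeight a b c t ≠ 0 := by
  fin_cases t <;> simp [colourWeight]

lemma one_add_mul_colourProd_eq_monomialProd (hq : ∀ n, IsUnit (1 - q ^ (n + 1))) (a b c : σ) :
    (1 + C (MvPowerSeries.X b * MvPowerSeries.X c) * X) *
        colourProd (MvPowerSeries.C q) (MvPowerSeries.X a) (MvPowerSeries.X b) (MvPowerSeries.X c) =
      monomialProd (colourWeight a b c)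
        ![qExp q, qExp q, qExp q, qExpTri q, qExpTri q, (1 + X) * qExpTri q] := by
  simp only [monomialProd, colourProd, colourWeight, Fin.prod_univ_six, Matrix.cons_val,
    map_qExp _ hq, map_qExpTri _ hq, map_mul, map_add, map_one, map_X, rescale_X,
    MvPowerSeries.X_def, MvPowerSeries.monomial_mul_monomial, mul_one]
  ring

lemma coeff_add_single_X_mul (m : σ →₀ ℕ) (a : σ) (p : MvPowerSeries σ R) :
    MvPowerSeries.coeff (m + .single a 1) (MvPowerSeries.X a * p) = MvPowerSeries.coeff m p := by
  rw [add_comm, MvPowerSeries.X_def, MvPowerSeries.coeff_add_monomial_mul, one_mul]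

lemma coeff_gollnitzSeries_add_single (hq : ∀ n, IsUnit (1 - q ^ (n + 1))) {a b c : σ}
    (hb : b ≠ a) (hc : c ≠ a) {m : σ →₀ ℕ} {N : ℕ} (hN : m.degree < N) :
    (1 - q ^ (m a + 1)) * MvPowerSeries.coeff (m + .single a 1) (gollnitzSeries q (N + 1) a b c) =
      q ^ (m a + 1) * MvPowerSeries.coeff m (gollnitzSeries q (N + 1) a b c) := by
  classical
  set G := gollnitzSeries q (N + 1) a b c with hG
  obtain ⟨F, hF, hdilated⟩ : ∃ F : (MvPowerSeries σ R)⟦X⟧,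
      MvPowerSeries.coeff m (coeff N F) = 0 ∧
      G = MvPowerSeries.rescale (Function.update 1 a q) G + MvPowerSeries.X a * (MvPowerSeries.C q *
        MvPowerSeries.rescale (Function.update 1 a q) G -
          MvPowerSeries.C (q ^ tri (N + 1)) * coeff N F) := by
    refine ⟨_, coeff_coeff_monomialProd_eq_zero (colourWeight_ne_zero a b c)
      ![qExp q, qExp q, qExp q, qExpTri q, qExpTri q, (1 + X) * qExpTri q] hN, ?_⟩
    rw [← one_add_mul_colourProd_eq_monomialProd hq, rescale_gollnitzSeries hq _ hb hc, map_pow, hG,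
      gollnitzSeries]
    linear_combination gollnitzSum_sub_dilated (isUnit_one_sub_map_pow MvPowerSeries.C hq) N
      (MvPowerSeries.X a) (MvPowerSeries.X b) (MvPowerSeries.X c)
  have hcoeff := congrArg (MvPowerSeries.coeff (m + .single a 1)) hdilated
  simp only [map_add, map_sub, coeff_add_single_X_mul, MvPowerSeries.coeff_C_mul,
    coeff_mvRescale_update_one, hF, Finsupp.add_apply, Finsupp.single_eq_same] at hcoeff
  linear_combination hcoeff

lemma gollnitzSeries_swap₁₂ (q : R) (N : ℕ) (a b c : σ) :
    gollnitzSeries q N b a c = gollnitzSeries q N a b c :=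
  gollnitzSum_swap₁₂ ..

lemma gollnitzSeries_swap₁₃ (q : R) (N : ℕ) (a b c : σ) :
    gollnitzSeries q N c b a = gollnitzSeries q N a b c :=
  gollnitzSum_swap₁₃ ..

lemma coeff_zero_gollnitzSeries (hq : ∀ n, IsUnit (1 - q ^ (n + 1))) (N : ℕ) (a b c : σ) :
    MvPowerSeries.coeff 0 (gollnitzSeries q (N + 1) a b c) = 1 := by
  rw [MvPowerSeries.coeff_zero_eq_constantCoeff_apply, gollnitzSeries,
    map_gollnitzSum _ (isUnit_one_sub_map_pow _ hq)]
  simp [gollnitzSum_zero]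

lemma coeff_gollnitzSeries_add_single_eq (hq : ∀ n, IsUnit (1 - q ^ (n + 1))) {a b c : σ}
    (hb : b ≠ a) (hc : c ≠ a) {m : σ →₀ ℕ} (hm : m a = 0) {n N : ℕ} (hN : m.degree + n ≤ N) :
    MvPowerSeries.coeff (m + .single a n) (gollnitzSeries q (N + 1) a b c) =
      q ^ tri n * Ring.inverse (qPoch q n) *
        MvPowerSeries.coeff m (gollnitzSeries q (N + 1) a b c) := by
  have hrec : ∀ l < n, (1 - q ^ (l + 1)) *
        MvPowerSeries.coeff (m + .single a (l + 1)) (gollnitzSeries q (N + 1) a b c) =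
      q ^ (l + 1) * MvPowerSeries.coeff (m + .single a l) (gollnitzSeries q (N + 1) a b c) := by
    intro l hl
    have hdeg : (m + .single a l).degree < N := by
      rw [map_add, Finsupp.degree_single]
      omega
    simpa [hm, add_assoc, ← Finsupp.single_add] using
      coeff_gollnitzSeries_add_single hq hb hc hdeg
  have h := eq_pow_tri_mul_inverse_qPoch_mul hq
    (g := fun l ↦ MvPowerSeries.coeff (m + .single a l) (gollnitzSeries q (N + 1) a b c)) hrec
  rwa [Finsupp.single_zero, add_zero] at h

theorem coeff_gollnitzSeries (hq : ∀ n, IsUnit (1 - q ^ (n + 1))) {a b c : σ}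
    (hab : a ≠ b) (hac : a ≠ c) (hbc : b ≠ c) {i j k N : ℕ} (hN : i + j + k ≤ N) :
    MvPowerSeries.coeff (.single a i + .single b j + .single c k)
        (gollnitzSeries q (N + 1) a b c) =
      q ^ (tri i + tri j + tri k) * Ring.inverse (qPoch q i * qPoch q j * qPoch q k) := by
  have hi : MvPowerSeries.coeff (.single a i) (gollnitzSeries q (N + 1) a b c) =
      q ^ tri i * Ring.inverse (qPoch q i) := by
    have h := coeff_gollnitzSeries_add_single_eq (m := 0) hq hab.symm hac.symm rfl
      (show (0 : σ →₀ ℕ).degree + i ≤ N by rw [map_zero]; omega)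
    rwa [zero_add, coeff_zero_gollnitzSeries hq, mul_one] at h
  have hj : MvPowerSeries.coeff (.single a i + .single b j) (gollnitzSeries q (N + 1) a b c) =
      q ^ tri j * Ring.inverse (qPoch q j) * (q ^ tri i * Ring.inverse (qPoch q i)) := by
    rw [← hi, ← gollnitzSeries_swap₁₂]
    exact coeff_gollnitzSeries_add_single_eq hq hab hbc.symm (by simp [hab])
      (by rw [Finsupp.degree_single]; omega)
  rw [← gollnitzSeries_swap₁₃, coeff_gollnitzSeries_add_single_eq hq hbc hac
    (by simp [hac, hbc]) (by rw [map_add, Finsupp.degree_single, Finsupp.degree_single]; omega),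
    gollnitzSeries_swap₁₃, hj, Ring.mul_inverse_rev, Ring.mul_inverse_rev]
  ring

end Recurrence

section FinsumPi

variable {α M : Type*} [AddCommMonoid M]

lemma finsum_pi_fin_succ {n : ℕ} {f : (Fin (n + 1) → α) → M} (hf : f.HasFiniteSupport) :
    ∑ᶠ x, f x = ∑ᶠ (a) (y), f (Fin.cons a y) := by
  rw [← finsum_comp_equiv (Fin.consEquiv fun _ ↦ α)]
  exact finsum_curry _ (hf.preimage (Equiv.injective _).injOn)

lemma hasFiniteSupport_comp_fin_cons {n : ℕ} {f : (Fin (n + 1) → α) → M}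
    (hf : f.HasFiniteSupport) (a : α) :
    Function.HasFiniteSupport fun y : Fin n → α ↦ f (Fin.cons a y) :=
  Set.Finite.preimage (Fin.cons_right_injective (α := fun _ ↦ α) a).injOn hf

lemma finsum_pi_fin_six {f : (Fin 6 → α) → M} (hf : f.HasFiniteSupport) :
    ∑ᶠ x, f x = ∑ᶠ (a) (b) (c) (d) (e) (g), f ![a, b, c, d, e, g] := by
  iterate 6
    rw [finsum_pi_fin_succ hf]
    refine finsum_congr fun a ↦ ?_
    replace hf := hasFiniteSupport_comp_fin_cons hf a
  exact finsum_unique _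

end FinsumPi

section KeyIdentity

variable {σ R : Type*} [CommRing R] {q : R}

/-- The summand of the left-hand side of the key identity. -/
noncomputable def gollnitzTerm (q : R) (α β γ δ ε φ : ℕ) : R :=
  q ^ (tri (α + β + γ + δ + ε + φ) + tri δ + tri ε + tri (φ - 1)) *
    (1 - q ^ α + q ^ (α + φ)) *
    Ring.inverse (qPoch q α * qPoch q β * qPoch q γ * qPoch q δ * qPoch q ε * qPoch q φ)

lemma monomialProd_dilated (hq : ∀ n, IsUnit (1 - q ^ (n + 1))) (a b c : σ) :
    monomialProd (colourWeight a b c)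
        ![rescale q (qExp q), qExp q, qExp q, qExpTri q, qExpTri q, X * qExpTri q] =
      (1 - C (MvPowerSeries.X a) * X) * (C (MvPowerSeries.X b * MvPowerSeries.X c) * X) *
        colourProd (MvPowerSeries.C q) (MvPowerSeries.X a) (MvPowerSeries.X b)
          (MvPowerSeries.X c) := by
  simp only [rescale_qExp hq, monomialProd, colourProd, colourWeight, Fin.prod_univ_six,
    Matrix.cons_val, map_qExp _ hq, map_qExpTri _ hq, map_mul, map_sub, map_one, map_X, rescale_X,
    MvPowerSeries.X_def, MvPowerSeries.monomial_mul_monomial, mul_one]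
  ring

lemma one_add_mul_sq_mul_colourProd_eq (hq : ∀ n, IsUnit (1 - q ^ (n + 1))) (a b c : σ) :
    (1 + C (MvPowerSeries.X a * MvPowerSeries.X b * MvPowerSeries.X c) * X ^ 2) *
        colourProd (MvPowerSeries.C q) (MvPowerSeries.X a) (MvPowerSeries.X b) (MvPowerSeries.X c) =
      monomialProd (colourWeight a b c)
        ![qExp q, qExp q, qExp q, qExpTri q, qExpTri q, (1 + X) * qExpTri q] -
      monomialProd (colourWeight a b c)
        ![rescale q (qExp q), qExp q, qExp q, qExpTri q, qExpTri q, X * qExpTri q] := by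
  rw [← one_add_mul_colourProd_eq_monomialProd hq, monomialProd_dilated hq]
  simp only [map_mul]
  ring

lemma coeff_gollnitzSeries_eq_sum [DecidableEq σ] (hq : ∀ n, IsUnit (1 - q ^ (n + 1)))
    (a b c : σ) {m : σ →₀ ℕ} {N : ℕ} (hN : m.degree < N) :
    MvPowerSeries.coeff m (gollnitzSeries q N a b c) =
      ∑ x ∈ weightSolutions (colourWeight a b c) m,
        gollnitzTerm q (x 0) (x 1) (x 2) (x 3) (x 4) (x 5) := by
  rw [gollnitzSeries, gollnitzSum, one_add_mul_sq_mul_colourProd_eq hq, map_sub, map_sub,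
    coeff_triSum_monomialProd (colourWeight_ne_zero a b c) _ _ hN,
    coeff_triSum_monomialProd (colourWeight_ne_zero a b c) _ _ hN, ← sum_sub_distrib]
  refine sum_congr rfl fun x _ ↦ ?_
  simp only [Fin.prod_univ_six, Fin.sum_univ_six, Matrix.cons_val, coeff_rescale,
    coeff_one_add_X_mul_qExpTri hq, coeff_X_mul_qExpTri hq, coeff_qExp, coeff_qExpTri,
    gollnitzTerm, Ring.mul_inverse_rev]
  ring

theorem gollnitz_key_identity_general (hq : ∀ n, IsUnit (1 - q ^ (n + 1))) (i j k : ℕ) :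
    (∑ᶠ (α : ℕ) (β : ℕ) (γ : ℕ) (δ : ℕ) (ε : ℕ) (φ : ℕ),
      if α + δ + ε = i ∧ β + δ + φ = j ∧ γ + ε + φ = k then
        q ^ (tri (α + β + γ + δ + ε + φ) + tri δ + tri ε + tri (φ - 1)) *
          (1 - q ^ α + q ^ (α + φ)) *
          Ring.inverse (qPoch q α * qPoch q β * qPoch q γ * qPoch q δ * qPoch q ε * qPoch q φ)
      else 0) =
    q ^ (tri i + tri j + tri k) * Ring.inverse (qPoch q i * qPoch q j * qPoch q k) := by
  let m : Fin 3 →₀ ℕ := .single 0 i + .single 1 j + .single 2 k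
  let S := weightSolutions (colourWeight (0 : Fin 3) 1 2) m
  have hS (x : Fin 6 → ℕ) :
      x ∈ S ↔ x 0 + x 3 + x 4 = i ∧ x 1 + x 3 + x 5 = j ∧ x 2 + x 4 + x 5 = k := by
    rw [mem_weightSolutions (colourWeight_ne_zero _ _ _), DFunLike.ext_iff]
    simp [Fin.forall_fin_succ, Fin.sum_univ_six, colourWeight, m]
  have hsupp : Function.support (fun x : Fin 6 → ℕ ↦
      if x 0 + x 3 + x 4 = i ∧ x 1 + x 3 + x 5 = j ∧ x 2 + x 4 + x 5 = k then
        gollnitzTerm q (x 0) (x 1) (x 2) (x 3) (x 4) (x 5) else 0) ⊆ S :=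
    fun x hx ↦ (hS x).2 (by by_contra h; simp [h] at hx)
  calc _ = _ := (finsum_pi_fin_six (S.finite_toSet.subset hsupp)).symm
    _ = ∑ x ∈ S, gollnitzTerm q (x 0) (x 1) (x 2) (x 3) (x 4) (x 5) := by
      rw [finsum_eq_sum_of_support_subset _ hsupp]
      exact sum_congr rfl fun x hx ↦ if_pos ((hS x).1 hx)
    _ = _ := by
      rw [← coeff_gollnitzSeries_eq_sum hq 0 1 2 (Nat.lt_succ_self _)]
      exact coeff_gollnitzSeries hq (by decide) (by decide) (by decide) (by simp [m])

end KeyIdentity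

lemma inverse_eq_ringInverse {K : Type*} [Field K] (f : K⟦X⟧) : f⁻¹ = Ring.inverse f := by
  by_cases hf : constantCoeff f = 0
  · rw [PowerSeries.inv_eq_zero.2 hf, Ring.inverse_non_unit]
    simpa [isUnit_iff_constantCoeff] using hf
  · have hunit : IsUnit f := isUnit_iff_constantCoeff.2 (Ne.isUnit hf)
    exact hunit.mul_left_cancel <|
      (PowerSeries.mul_inv_cancel f hf).trans (Ring.mul_inverse_cancel f hunit).symm

lemma isUnit_one_sub_X_pow {R : Type*} [CommRing R] (n : ℕ) :
    IsUnit (1 - (X : R⟦X⟧) ^ (n + 1)) := by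
  simp [isUnit_iff_constantCoeff]

/-- The key identity (6.1) for Göllnitz's theorem, at the level of coefficients of
`A^i B^j C^k`: for `i, j, k ≥ 0`,
`∑ q^{T_s + T_δ + T_ε + T_{φ-1}} (1 - q^α + q^{α+φ}) / ((q)_α (q)_β (q)_γ (q)_δ (q)_ε (q)_φ)
  = q^{T_i + T_j + T_k} / ((q)_i (q)_j (q)_k)`,
the sum being over all non-negative `α, β, γ, δ, ε, φ` with `i = α + δ + ε`,
`j = β + δ + φ`, `k = γ + ε + φ`, where `s = α + β + γ + δ + ε + φ`. -/
theorem gollnitz_key_identity (i j k : ℕ) :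
    (∑ᶠ (α : ℕ) (β : ℕ) (γ : ℕ) (δ : ℕ) (ε : ℕ) (φ : ℕ),
      if α + δ + ε = i ∧ β + δ + φ = j ∧ γ + ε + φ = k then
        (PowerSeries.X : PowerSeries ℚ) ^
            (tri (α + β + γ + δ + ε + φ) + tri δ + tri ε + tri (φ - 1)) *
          (1 - (PowerSeries.X : PowerSeries ℚ) ^ α +
            (PowerSeries.X : PowerSeries ℚ) ^ (α + φ)) *
          (qPochPS α * qPochPS β * qPochPS γ * qPochPS δ * qPochPS ε * qPochPS φ)⁻¹
      else 0) =
    (PowerSeries.X : PowerSeries ℚ) ^ (tri i + tri j + tri k) *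
      (qPochPS i * qPochPS j * qPochPS k)⁻¹ := by
  simp only [inverse_eq_ringInverse]
  exact gollnitz_key_identity_general isUnit_one_sub_X_pow i j k
end
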